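/- arXiv:2407.09815 — 2 statements merged into one kernel-verified Lean document; each statement's English description precedes it below -/
import Mathlib

section
/- Let k ∈ {0,1}, p > 1, and f, g ∈ ℓ^{2,k}(ℤ^d). Consider the focusing semilinear wave equation ∂_t² u − Δu = |u|^{p−1}u on ℤ^d with initial data u(·,0) = εf, ∂_t u(·,0) = εg. Then there exists a constant K > 0 (depending on p, f, g, d) such that for all sufficiently small ε > 0 the maximal existence time of the solution in C²([0,T]; ℓ^{2,k}(ℤ^d)) satisfies T*(ε) ≥ K·(1/ε)^{(p−1)/(p+1)}. -/
/-!
The power nonlinearity is replaced by `n(z) = min(|z|, A)^{p-1} z` (`trunc`), which is globally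
Lipschitz on `ℂ` and hence acts as a globally Lipschitz map on `ℓ²` and on every weighted space.
As the discrete Laplacian is bounded on these spaces, the truncated wave equation is a globally
Lipschitz first-order system and has solutions in `ℓ^{2,k}` on every `[0, T]` (`ode_global`).
It then suffices that the solution satisfies `|u| ≤ A` on `[0, T]`, because there the truncation
is inactive (`exists_sol`).

This pointwise bound comes from the unweighted `ℓ²` energy `‖u'‖² + ∑ ‖Dⱼ u‖²` (`energy_bound`).
Since `‖n(u)‖ ≤ A^{p-1} ‖u‖`, it gives `‖u(t)‖ ≤ 2(‖u(0)‖ + T E₀)` whenever `4 A^{p-1} T² ≤ 1`,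
with `u(0)` and `E₀` of size `ε`. With `R = (1/ε)^{(p-1)/(p+1)}` and `A` a multiple of `ε R`, both
`2(‖u(0)‖ + T E₀) ≤ A` and `4 A^{p-1} T² ≤ 1` hold for `T < K R`, because
`(ε R)^{p-1} R² = 1` (`scaling`).

Elements of `ℓ^{2,k}` are encoded as `⟨m⟩^{-k} h` with `h` in Mathlib's `lp`, `p = 2`; operators on
`ℓ^{2,k}` become operators on `ℓ²` conjugated by the weight, bounded because `⟨m⟩` changes by at
most a factor `2` between neighbours.
-/

open scoped BigOperators ENNReal NNReal
open MeasureTheory Filter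

noncomputable section

/-- Kernel `φⱼ` of the discrete partial derivative on `ℤ^d`:
`φⱼ(m) = -4i/(π(4a²-1))` if `m = a·eⱼ`, and `0` otherwise. -/
def phi (d : ℕ) (j : Fin d) (m : Fin d → ℤ) : ℂ :=
  if ∀ i, i ≠ j → m i = 0 then
    (-4 * Complex.I) / ((Real.pi : ℂ) * (4 * (m j : ℂ) ^ 2 - 1))
  else 0

/-- Discrete convolution on `ℤ^d`. -/
def dconv {d : ℕ} (u v : (Fin d → ℤ) → ℂ) (k : Fin d → ℤ) : ℂ :=
  ∑' m, u m * v (k - m)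

/-- Discrete partial derivative `∂ⱼ u = u ∗ φⱼ`. -/
def pd {d : ℕ} (j : Fin d) (u : (Fin d → ℤ) → ℂ) : (Fin d → ℤ) → ℂ :=
  dconv u (phi d j)

/-- Japanese bracket `⟨m⟩ = (1+|m|²)^{1/2}`. -/
def jap {d : ℕ} (m : Fin d → ℤ) : ℝ :=
  Real.sqrt (1 + ∑ i, ((m i : ℝ)) ^ 2)

open scoped Classical in
/-- `ℓ^p` norm on `ℤ^d` (valued in `ℝ≥0∞`), `1 ≤ p ≤ ∞`. -/
def lpn {d : ℕ} (p : ℝ≥0∞) (f : (Fin d → ℤ) → ℂ) : ℝ≥0∞ :=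
  if p = ⊤ then ⨆ m, (‖f m‖₊ : ℝ≥0∞)
  else (∑' m, (‖f m‖₊ : ℝ≥0∞) ^ p.toReal) ^ (1 / p.toReal)

/-- Weighted `ℓ^{2,k}` norm: the `ℓ²` norm of `m ↦ ⟨m⟩^k f(m)`. -/
def w2 {d : ℕ} (k : ℕ) (f : (Fin d → ℤ) → ℂ) : ℝ≥0∞ :=
  lpn 2 (fun m => ((jap m ^ k : ℝ) : ℂ) * f m)

/-- Discrete Laplacian on `ℤ^d`. -/
def lap {d : ℕ} (u : (Fin d → ℤ) → ℂ) (x : Fin d → ℤ) : ℂ :=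
  ∑ j, (u (x + Pi.single j 1) + u (x - Pi.single j 1) - 2 * u x)

/-- Continuity of a curve `t ↦ f(·,t)` into `ℓ^{2,k}(ℤ^d)` on a set `S` of times. -/
def ContW {d : ℕ} (k : ℕ) (S : Set ℝ) (f : ℝ → (Fin d → ℤ) → ℂ) : Prop :=
  ∀ t ∈ S, Tendsto (fun s => w2 k (fun m => f s m - f t m))
    (nhdsWithin t S) (nhds (0 : ℝ≥0∞))

/-- `f'` is the derivative (in the `ℓ^{2,k}(ℤ^d)` norm) of the curve `t ↦ f(·,t)` on `S`. -/
def DerivW {d : ℕ} (k : ℕ) (S : Set ℝ) (f f' : ℝ → (Fin d → ℤ) → ℂ) : Prop :=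
  ∀ t ∈ S, Tendsto
    (fun s => w2 k (fun m => (s - t)⁻¹ • (f s m - f t m) - f' t m))
    (nhdsWithin t (S \ {t})) (nhds (0 : ℝ≥0∞))

/-- `u ∈ C²(S; ℓ^{2,k}(ℤ^d))`, with first and second time derivatives `u1`, `u2`. -/
structure IsC2 {d : ℕ} (k : ℕ) (S : Set ℝ) (u u1 u2 : ℝ → (Fin d → ℤ) → ℂ) : Prop where
  mem0 : ∀ t ∈ S, w2 k (u t) < ⊤
  mem1 : ∀ t ∈ S, w2 k (u1 t) < ⊤
  mem2 : ∀ t ∈ S, w2 k (u2 t) < ⊤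
  cont0 : ContW k S u
  cont1 : ContW k S u1
  cont2 : ContW k S u2
  hder1 : DerivW k S u u1
  hder2 : DerivW k S u1 u2

/-- `u` (with time derivatives `u1`, `u2`) is a classical solution in
`C²(S; ℓ^{2,k}(ℤ^d))` of the power-nonlinearity wave equation
`∂ₜ²u - Δu = μ|u|^{p-1}u` with data `u(·,0)=f`, `∂ₜu(·,0)=g`. -/
def PSol (d k : ℕ) (p μ : ℝ) (f g : (Fin d → ℤ) → ℂ)
    (S : Set ℝ) (u u1 u2 : ℝ → (Fin d → ℤ) → ℂ) : Prop :=
  IsC2 k S u u1 u2 ∧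
    (∀ t ∈ S, ∀ x,
      u2 t x - lap (u t) x = (μ : ℂ) * ((‖u t x‖ ^ (p - 1) : ℝ) : ℂ) * u t x) ∧
    (∀ x, u 0 x = f x) ∧ (∀ x, u1 0 x = g x)

/-! ### Globally Lipschitz ODEs -/

/-- A globally Lipschitz autonomous ODE can be solved on any interval of length at
most `1 / (2K)`; this length does not depend on the initial value. -/
lemma ode_step {E : Type*} [NormedAddCommGroup E] [NormedSpace ℝ E] [CompleteSpace E]
    {F : E → E} {K : ℝ≥0} (hF : LipschitzWith K F) {c e : ℝ} (hce : c ≤ e)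
    (hτ : K * (e - c) ≤ 1 / 2) (x : E) :
    ∃ α : ℝ → E, α c = x ∧ ∀ t ∈ Set.Icc c e, HasDerivWithinAt α (F (α t)) (Set.Icc c e) t := by
  -- On the ball of radius `a` about `x`, `‖F‖ ≤ ‖F x‖ + K a`, and `a = 2 ‖F x‖ (e - c)`
  -- absorbs `(e - c) (‖F x‖ + K a)` since `K (e - c) ≤ 1/2`.
  set a : ℝ≥0 := 2 * ‖F x‖₊ * (e - c).toNNReal with ha
  have haR : (a : ℝ) = 2 * ‖F x‖ * (e - c) := by
    simp [ha, Real.coe_toNNReal _ (sub_nonneg.2 hce)]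
  have hPL : IsPicardLindelof (fun _ ↦ F) (tmin := c) (tmax := e) ⟨c, by simp [hce]⟩ x a 0
      (‖F x‖₊ + K * a) K := by
    apply IsPicardLindelof.of_time_independent
    · intro y hy
      have h1 := hF.dist_le_mul y x
      rw [dist_eq_norm] at h1
      have h2 : ‖F y‖ ≤ ‖F x‖ + ‖F y - F x‖ := norm_le_norm_add_norm_sub' _ _
      have h3 : (K : ℝ) * dist y x ≤ K * a := by
        gcongr
        exact hy
      push_cast
      linarith
    · exact hF.lipschitzOnWith
    · simp only [sub_self, NNReal.coe_zero, sub_zero]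
      rw [max_eq_left (by linarith)]
      push_cast
      rw [haR]
      have := mul_le_mul_of_nonneg_left hτ
        (show 0 ≤ 2 * ‖F x‖ * (e - c) from mul_nonneg (by positivity) (by linarith))
      nlinarith
  obtain ⟨α, h1, h2⟩ := hPL.exists_eq_forall_mem_Icc_hasDerivWithinAt₀
  exact ⟨α, h1, h2⟩

lemma ode_nat {E : Type*} [NormedAddCommGroup E] [NormedSpace ℝ E] [CompleteSpace E]
    {F : E → E} {K : ℝ≥0} (hF : LipschitzWith K F) (x : E) {τ : ℝ} (hτ0 : 0 ≤ τ)
    (hτ : K * τ ≤ 1 / 2) (n : ℕ) :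
    ∃ α : ℝ → E, α 0 = x ∧
      ∀ t ∈ Set.Icc 0 (n * τ), HasDerivWithinAt α (F (α t)) (Set.Icc 0 (n * τ)) t := by
  induction n with
  | zero => simpa using ode_step hF (le_refl 0) (by simp) x
  | succ n ih =>
    obtain ⟨α, hα0, hα⟩ := ih
    set c : ℝ := n * τ with hc
    have hc0 : 0 ≤ c := by positivity
    have he : ((n + 1 : ℕ) : ℝ) * τ = c + τ := by push_cast; ring
    obtain ⟨β, hβ0, hβ⟩ := ode_step hF (show c ≤ c + τ by linarith) (by simpa using hτ) (α c)
    rw [he, ← Set.Icc_union_Icc_eq_Icc hc0 (show c ≤ c + τ by linarith)]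
    set γ : ℝ → E := fun t ↦ if t ≤ c then α t else β t with hγ
    have hγα : ∀ t ∈ Set.Icc 0 c, γ t = α t := fun t ht ↦ by simp [hγ, ht.2]
    have hγβ : ∀ t ∈ Set.Icc c (c + τ), γ t = β t := by
      intro t ht
      rcases ht.1.eq_or_lt with h | h
      · subst h; simp [hγ, hβ0]
      · simp [hγ, not_le.2 h]
    refine ⟨γ, by rw [hγα 0 ⟨le_rfl, hc0⟩, hα0], fun t _ ↦ HasDerivWithinAt.union ?_ ?_⟩
    · by_cases h : t ∈ Set.Icc 0 c
      · rw [hγα t h]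
        exact (hα t h).congr hγα (hγα t h)
      · exact HasFDerivWithinAt.of_notMem_closure (by rwa [isClosed_Icc.closure_eq])
    · by_cases h : t ∈ Set.Icc c (c + τ)
      · rw [hγβ t h]
        exact (hβ t h).congr hγβ (hγβ t h)
      · exact HasFDerivWithinAt.of_notMem_closure (by rwa [isClosed_Icc.closure_eq])

/-- A globally Lipschitz autonomous ODE has a solution on every interval `[0, T]`. -/
lemma ode_global {E : Type*} [NormedAddCommGroup E] [NormedSpace ℝ E] [CompleteSpace E]
    {F : E → E} {K : ℝ≥0} (hF : LipschitzWith K F) (x : E) (T : ℝ) :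
    ∃ α : ℝ → E, α 0 = x ∧
      ∀ t ∈ Set.Icc 0 T, HasDerivWithinAt α (F (α t)) (Set.Icc 0 T) t := by
  have hτ : (0 : ℝ) < 1 / (2 * (K + 1)) := by positivity
  obtain ⟨n, hn⟩ := Archimedean.arch T hτ
  obtain ⟨α, h0, h1⟩ := ode_nat hF x hτ.le
    (by rw [mul_one_div, div_le_div_iff₀ (by positivity) (by norm_num)]; linarith) n
  rw [nsmul_eq_mul] at hn
  have hsub : Set.Icc 0 T ⊆ Set.Icc 0 (n * (1 / (2 * ((K : ℝ) + 1)))) :=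
    Set.Icc_subset_Icc_right hn
  exact ⟨α, h0, fun t ht ↦ (h1 t (hsub ht)).mono hsub⟩

/-! ### Energy estimate -/

/-- Energy estimate for `u'' = L u + N` with `-L = ∑ Dⱼ* Dⱼ ≥ 0` and `‖N‖ ≤ b ‖u‖`, on a time
interval short enough (`4 b T² ≤ 1`) for the forcing to be absorbed. The conserved quantity of the
free equation is `‖u'‖² + ∑ ‖Dⱼ u‖²`, whose initial value is at most `E₀²`. -/
lemma energy_bound {H : Type*} [NormedAddCommGroup H] [InnerProductSpace ℝ H] {J : Type*}
    [Fintype J] (L : H →L[ℝ] H) (D : J → H →L[ℝ] H)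
    (hLD : ∀ x y, inner ℝ (L x) y = -∑ j, inner ℝ (D j x) (D j y))
    {T b E₀ : ℝ} (hT : 0 ≤ T) (hb : 0 ≤ b) (hE₀ : 0 ≤ E₀) (hbT : 4 * (b * T ^ 2) ≤ 1)
    {u v N : ℝ → H}
    (hu : ∀ t ∈ Set.Icc 0 T, HasDerivWithinAt u (v t) (Set.Icc 0 T) t)
    (hv : ∀ t ∈ Set.Icc 0 T, HasDerivWithinAt v (L (u t) + N t) (Set.Icc 0 T) t)
    (hN : ∀ t ∈ Set.Icc 0 T, ‖N t‖ ≤ b * ‖u t‖)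
    (h0 : ‖v 0‖ ^ 2 + ∑ j, ‖D j (u 0)‖ ^ 2 ≤ E₀ ^ 2) :
    ∀ t ∈ Set.Icc 0 T, ‖u t‖ ≤ 2 * (‖u 0‖ + T * E₀) := by
  have hne : (Set.Icc 0 T).Nonempty := ⟨0, le_rfl, hT⟩
  have h00 : (0 : ℝ) ∈ Set.Icc 0 T := ⟨le_rfl, hT⟩
  have cu : ContinuousOn (fun t ↦ ‖u t‖) (Set.Icc 0 T) :=
    ContinuousOn.norm fun t ht ↦ (hu t ht).continuousWithinAt
  have cv : ContinuousOn (fun t ↦ ‖v t‖) (Set.Icc 0 T) :=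
    ContinuousOn.norm fun t ht ↦ (hv t ht).continuousWithinAt
  obtain ⟨tu, htu, hM⟩ := isCompact_Icc.exists_isMaxOn hne cu
  obtain ⟨tv, htv, hV⟩ := isCompact_Icc.exists_isMaxOn hne cv
  set M := ‖u tu‖ with hMdef
  set V := ‖v tv‖ with hVdef
  have hM' : ∀ t ∈ Set.Icc 0 T, ‖u t‖ ≤ M := fun t ht ↦ hM ht
  have hV' : ∀ t ∈ Set.Icc 0 T, ‖v t‖ ≤ V := fun t ht ↦ hV ht
  have hM0 : 0 ≤ M := norm_nonneg _
  have hV0 : 0 ≤ V := norm_nonneg _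
  set e : ℝ → ℝ := fun t ↦ ‖v t‖ ^ 2 + ∑ j, ‖D j (u t)‖ ^ 2 with he
  have hder : ∀ t ∈ Set.Icc 0 T,
      HasDerivWithinAt e (2 * inner ℝ (v t) (N t)) (Set.Icc 0 T) t := by
    intro t ht
    have h1 := (hv t ht).norm_sq
    have h2 : HasDerivWithinAt (fun t ↦ ∑ j, ‖D j (u t)‖ ^ 2)
        (∑ j, 2 * inner ℝ (D j (u t)) (D j (v t))) (Set.Icc 0 T) t :=
      HasDerivWithinAt.fun_sum fun j _ ↦
        ((D j).hasFDerivAt.comp_hasDerivWithinAt t (hu t ht)).norm_sq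
    refine (h1.add h2).congr_deriv ?_
    have h3 := hLD (u t) (v t)
    rw [inner_add_right, real_inner_comm (L (u t)), h3, ← Finset.mul_sum]
    ring
  have hbd : ∀ t ∈ Set.Icc 0 T, ‖2 * inner ℝ (v t) (N t)‖ ≤ 2 * (V * (b * M)) := by
    intro t ht
    rw [norm_mul, Real.norm_ofNat]
    gcongr
    refine (norm_inner_le_norm _ _).trans (mul_le_mul (hV' t ht) ?_ (norm_nonneg _) hV0)
    exact (hN t ht).trans (by gcongr; exact hM' t ht)
  have key1 := (convex_Icc 0 T).norm_image_sub_le_of_norm_hasDerivWithin_le hder hbd h00 htv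
  have key2 := (convex_Icc 0 T).norm_image_sub_le_of_norm_hasDerivWithin_le hu hV' h00 htu
  have hVE : V ≤ E₀ + 2 * (b * M) * T := by
    have h1 : e tv - e 0 ≤ 2 * (V * (b * M)) * T := by
      refine (le_abs_self _).trans (key1.trans ?_)
      gcongr
      rw [sub_zero, Real.norm_of_nonneg htv.1]
      exact htv.2
    have h2 : V ^ 2 ≤ e tv := le_add_of_nonneg_right (Finset.sum_nonneg fun j _ ↦ sq_nonneg _)
    have h3 : V ^ 2 ≤ E₀ ^ 2 + 2 * (b * M) * T * V := by
      have : e 0 ≤ E₀ ^ 2 := h0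
      linarith
    by_contra! hcon
    have : 0 ≤ 2 * (b * M) * T := by positivity
    nlinarith
  have hMV : M ≤ ‖u 0‖ + V * T := by
    have h1 : M ≤ ‖u 0‖ + ‖u tu - u 0‖ := norm_le_norm_add_norm_sub' _ _
    have h2 : V * ‖tu - 0‖ ≤ V * T := by
      gcongr
      rw [sub_zero, Real.norm_of_nonneg htu.1]
      exact htu.2
    linarith
  have hfin : M ≤ 2 * (‖u 0‖ + T * E₀) := by
    have h1 : V * T ≤ (E₀ + 2 * (b * M) * T) * T := by gcongr
    have h2 := mul_le_mul_of_nonneg_right hbT hM0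
    nlinarith
  exact fun t ht ↦ (hM' t ht).trans hfin

/-! ### Truncated power nonlinearity -/

/-- The power nonlinearity `|z|^{p-1} z`, with the coefficient frozen for `|z| ≥ A`; this makes it
globally Lipschitz. -/
def trunc (p A : ℝ) (z : ℂ) : ℂ := (min ‖z‖ A ^ (p - 1) : ℝ) • z

lemma norm_trunc_le {p A : ℝ} (hp : 1 < p) (hA : 0 ≤ A) (z : ℂ) :
    ‖trunc p A z‖ ≤ A ^ (p - 1) * ‖z‖ := by
  have h : 0 ≤ min ‖z‖ A := le_min (norm_nonneg _) hA
  rw [trunc, norm_smul, Real.norm_of_nonneg (Real.rpow_nonneg h _)]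
  gcongr
  exact min_le_right _ _

/-- Consequence of the convexity of `x ↦ x ^ p`. -/
lemma rpow_diff_mul_le {p a b A : ℝ} (hp : 1 < p) (hb : 0 ≤ b) (hba : b ≤ a) (haA : a ≤ A) :
    (a ^ (p - 1) - b ^ (p - 1)) * b ≤ p * A ^ (p - 1) * (a - b) := by
  rcases (hb.trans hba).eq_or_lt with ha | ha
  · have : b = 0 := le_antisymm (ha ▸ hba) hb
    subst this; rw [← ha]; simp
  have hab : 0 ≤ a ^ (p - 1) := by positivity
  have hpow : ∀ x : ℝ, 0 ≤ x → x ^ (p - 1) * x = x ^ p := fun x hx ↦ by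
    conv_lhs => rw [← Real.rpow_add_one' hx (by linarith)]
    simp
  have h1 := one_add_mul_self_le_rpow_one_add (s := b / a - 1) (by linarith [div_nonneg hb ha.le])
    hp.le
  rw [add_sub_cancel, Real.div_rpow hb ha.le, le_div_iff₀ (by positivity), ← hpow a ha.le,
    ← hpow b hb] at h1
  have h2 : (1 + p * (b / a - 1)) * (a ^ (p - 1) * a) = a ^ (p - 1) * (a + p * (b - a)) := by
    field_simp
  have h3 : a ^ (p - 1) ≤ A ^ (p - 1) := Real.rpow_le_rpow ha.le haA (by linarith)
  have h4 : p * a ^ (p - 1) * (a - b) ≤ p * A ^ (p - 1) * (a - b) := by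
    have := sub_nonneg.2 hba
    gcongr
  rw [h2] at h1
  nlinarith [mul_nonneg hab (sub_nonneg.2 hba)]

lemma trunc_sub_le {p A : ℝ} (hp : 1 < p) (hA : 0 ≤ A) (z w : ℂ) :
    ‖trunc p A z - trunc p A w‖ ≤ (1 + p) * A ^ (p - 1) * ‖z - w‖ := by
  wlog hwz : ‖w‖ ≤ ‖z‖ generalizing z w
  · rw [norm_sub_rev, norm_sub_rev z]
    exact this w z (le_of_not_ge hwz)
  have hz0 : 0 ≤ min ‖z‖ A := le_min (norm_nonneg _) hA
  have hw0 : 0 ≤ min ‖w‖ A := le_min (norm_nonneg _) hA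
  have hle : min ‖w‖ A ≤ min ‖z‖ A := min_le_min_right _ hwz
  have hAp : 0 ≤ A ^ (p - 1) := Real.rpow_nonneg hA _
  have hsplit : trunc p A z - trunc p A w = (min ‖z‖ A ^ (p - 1) : ℝ) • (z - w)
      + (min ‖z‖ A ^ (p - 1) - min ‖w‖ A ^ (p - 1) : ℝ) • w := by
    simp only [trunc, smul_sub, sub_smul]; abel
  have hmono : 0 ≤ min ‖z‖ A ^ (p - 1) - min ‖w‖ A ^ (p - 1) :=
    sub_nonneg.2 (Real.rpow_le_rpow hw0 hle (by linarith))
  have h1 : min ‖z‖ A ^ (p - 1) * ‖z - w‖ ≤ A ^ (p - 1) * ‖z - w‖ := by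
    gcongr
    exact min_le_right _ _
  have h2 : (min ‖z‖ A ^ (p - 1) - min ‖w‖ A ^ (p - 1)) * ‖w‖ ≤ p * A ^ (p - 1) * ‖z - w‖ := by
    rcases le_total ‖w‖ A with hw | hw
    · have h3 := rpow_diff_mul_le hp hw0 hle (min_le_right _ _)
      rw [min_eq_left hw] at h3 ⊢
      refine h3.trans ?_
      gcongr
      exact (sub_le_sub_right (min_le_left _ _) _).trans (norm_sub_norm_le z w)
    · rw [min_eq_right hw, min_eq_right (hw.trans hwz), sub_self, zero_mul]
      positivity
  rw [hsplit]
  refine (norm_add_le _ _).trans ?_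
  rw [norm_smul, norm_smul, Real.norm_of_nonneg hmono,
    Real.norm_of_nonneg (Real.rpow_nonneg hz0 _)]
  linarith

/-! ### Operators on the weighted lattice spaces -/

/-- `ℓ²(ℤ^d; ℂ)`, used as a real Hilbert space. -/
abbrev Hsp (d : ℕ) : Type := lp (fun _ : Fin d → ℤ => ℂ) 2

/-- Domination up to a bijection of the lattice gives membership in `ℓ²` and a norm bound. -/
lemma dominated {d : ℕ} (f : Hsp d) (σ : (Fin d → ℤ) ≃ (Fin d → ℤ)) (h : (Fin d → ℤ) → ℂ)
    {C : ℝ} (hC : 0 ≤ C) (hh : ∀ x, ‖h x‖ ≤ C * ‖f (σ x)‖) :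
    ∃ hm : Memℓp h 2, ‖(⟨h, hm⟩ : Hsp d)‖ ≤ C * ‖f‖ := by
  have h2 : (0 : ℝ) < (2 : ℝ≥0∞).toReal := by norm_num
  have hs := lp.hasSum_norm h2 f
  have hs' : HasSum (fun x ↦ C ^ (2 : ℝ≥0∞).toReal * ‖f (σ x)‖ ^ (2 : ℝ≥0∞).toReal)
      (C ^ (2 : ℝ≥0∞).toReal * ‖f‖ ^ (2 : ℝ≥0∞).toReal) :=
    (σ.hasSum_iff.2 hs).mul_left _
  have hle : ∀ x, ‖h x‖ ^ (2 : ℝ≥0∞).toReal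
      ≤ C ^ (2 : ℝ≥0∞).toReal * ‖f (σ x)‖ ^ (2 : ℝ≥0∞).toReal := fun x ↦ by
    rw [← Real.mul_rpow hC (norm_nonneg _)]
    exact Real.rpow_le_rpow (norm_nonneg _) (hh x) h2.le
  have hsum : Summable fun x ↦ ‖h x‖ ^ (2 : ℝ≥0∞).toReal :=
    Summable.of_nonneg_of_le (fun x ↦ by positivity) hle hs'.summable
  refine ⟨memℓp_gen hsum, lp.norm_le_of_tsum_le h2 (by positivity) ?_⟩
  rw [Real.mul_rpow hC (norm_nonneg _), ← hs'.tsum_eq]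
  exact hsum.tsum_le_tsum hle hs'.summable

/-- The bounded operator `f ↦ (x ↦ a(x) f(σ x))` on `ℓ²`, for a bounded coefficient `a` and a
bijection `σ` of the lattice. -/
def mulShift {d : ℕ} (a : (Fin d → ℤ) → ℝ) (σ : (Fin d → ℤ) ≃ (Fin d → ℤ)) (C : ℝ)
    (ha : ∀ x, |a x| ≤ C) : Hsp d →L[ℝ] Hsp d :=
  LinearMap.mkContinuous
    { toFun := fun f ↦ ⟨fun x ↦ a x • f (σ x), (dominated f σ _ ((abs_nonneg _).trans (ha 0))
        (fun x ↦ by rw [norm_smul]; gcongr; exact ha x)).1⟩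
      map_add' := fun f g ↦ by
        ext x
        exact smul_add (a x) (f (σ x)) (g (σ x))
      map_smul' := fun c f ↦ by
        ext x
        simp only [lp.coeFn_smul, Pi.smul_apply, RingHom.id_apply]
        exact smul_comm _ _ _ } C
    (fun f ↦ (dominated f σ _ ((abs_nonneg _).trans (ha 0))
        (fun x ↦ by rw [norm_smul]; gcongr; exact ha x)).2)

@[simp] lemma mulShift_apply {d : ℕ} (a : (Fin d → ℤ) → ℝ) (σ : (Fin d → ℤ) ≃ (Fin d → ℤ)) (C : ℝ)
    (ha : ∀ x, |a x| ≤ C) (f : Hsp d) (x : Fin d → ℤ) :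
    mulShift a σ C ha f x = a x • f (σ x) := rfl

lemma one_le_jap {d : ℕ} (m : Fin d → ℤ) : 1 ≤ jap m := by
  rw [jap, Real.one_le_sqrt]
  exact le_add_of_nonneg_right (Finset.sum_nonneg fun i _ ↦ sq_nonneg _)

lemma wt_pos {d : ℕ} (k : ℕ) (m : Fin d → ℤ) : 0 < jap m ^ k :=
  pow_pos (zero_lt_one.trans_le (one_le_jap m)) k

lemma one_le_wt {d : ℕ} (k : ℕ) (m : Fin d → ℤ) : 1 ≤ jap m ^ k :=
  one_le_pow₀ (one_le_jap m)

/-- The weight varies by at most a fixed factor between neighbours: `⟨x⟩ ≤ 2⟨y⟩` if `y = x ± eⱼ`. -/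
lemma jap_le {d : ℕ} (j : Fin d) {s : ℤ} (hs : s ^ 2 = 1) (x : Fin d → ℤ) :
    jap x ≤ 2 * jap (x + Pi.single j s) := by
  have hs' : (s : ℝ) ^ 2 = 1 := by exact_mod_cast hs
  have h1 : ∑ i, ((Pi.single j s : Fin d → ℤ) i : ℝ) ^ 2 = 1 := by
    rw [Finset.sum_eq_single j]
    · simpa using hs'
    · intro i _ hi; simp [hi]
    · simp
  have h2 : ∑ i, (x i : ℝ) ^ 2 ≤ 2 * ∑ i, (((x + Pi.single j s : Fin d → ℤ) i : ℤ) : ℝ) ^ 2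
      + 2 * ∑ i, ((Pi.single j s : Fin d → ℤ) i : ℝ) ^ 2 := by
    rw [Finset.mul_sum, Finset.mul_sum, ← Finset.sum_add_distrib]
    refine Finset.sum_le_sum fun i _ ↦ ?_
    rw [Pi.add_apply]
    push_cast
    nlinarith [sq_nonneg ((x i : ℝ) + 2 * ((Pi.single j s : Fin d → ℤ) i : ℝ))]
  have h0 : 0 ≤ ∑ i, (((x + Pi.single j s : Fin d → ℤ) i : ℤ) : ℝ) ^ 2 :=
    Finset.sum_nonneg fun i _ ↦ sq_nonneg _
  rw [jap, jap, Real.sqrt_le_left (by positivity), mul_pow, Real.sq_sqrt (by positivity)]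
  linarith

/-- The shift by `s eⱼ` conjugated by the weight: `⟨x⟩^k S ⟨x⟩^{-k}`. -/
def shiftW {d : ℕ} (k : ℕ) (j : Fin d) (s : ℤ) (hs : s ^ 2 = 1) : Hsp d →L[ℝ] Hsp d :=
  mulShift (fun x ↦ jap x ^ k / jap (x + Pi.single j s) ^ k) (Equiv.addRight (Pi.single j s))
    (2 ^ k) (fun x ↦ by
      rw [abs_of_pos (div_pos (wt_pos k _) (wt_pos k _)), div_le_iff₀ (wt_pos k _), ← mul_pow]
      have := zero_lt_one.trans_le (one_le_jap x)
      exact pow_le_pow_left₀ this.le (jap_le j hs x) k)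

/-- The discrete Laplacian conjugated by the weight `⟨x⟩^k`; for `k = 0` it is the Laplacian. -/
def lapW (d k : ℕ) : Hsp d →L[ℝ] Hsp d :=
  ∑ j, (shiftW k j 1 (by norm_num) + shiftW k j (-1) (by norm_num)
    - (2 : ℝ) • ContinuousLinearMap.id ℝ (Hsp d))

lemma lapW_apply {d k : ℕ} (f : Hsp d) (x : Fin d → ℤ) :
    lapW d k f x = (jap x ^ k : ℝ) • lap (fun m ↦ (jap m ^ k : ℝ)⁻¹ • f m) x := by
  simp only [lapW, lap, _root_.sum_apply, lp.coeFn_sum, Finset.sum_apply,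
    Finset.smul_sum]
  refine Finset.sum_congr rfl fun j _ ↦ ?_
  have hx : ((jap x : ℂ)) ^ k ≠ 0 := by exact_mod_cast (wt_pos k x).ne'
  simp only [_root_.sub_apply, _root_.add_apply,
    _root_.smul_apply, ContinuousLinearMap.id_apply, lp.coeFn_sub, lp.coeFn_add,
    lp.coeFn_smul, Pi.sub_apply, Pi.add_apply, Pi.smul_apply, shiftW, mulShift_apply,
    Equiv.coe_addRight, Complex.real_smul]
  have e : x - Pi.single j 1 = x + Pi.single j (-1) := by
    rw [sub_eq_add_neg, ← Pi.single_neg]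
  rw [e]
  push_cast
  field_simp

/-- Division by the weight `⟨x⟩^k`, an operator from the weighted picture to `ℓ²`. -/
def unW (d k : ℕ) : Hsp d →L[ℝ] Hsp d :=
  mulShift (fun x ↦ (jap x ^ k)⁻¹) (Equiv.refl _) 1 (fun x ↦ by
    rw [abs_of_pos (inv_pos.2 (wt_pos k x))]
    exact inv_le_one_of_one_le₀ (one_le_wt k x))

lemma unW_apply {d k : ℕ} (f : Hsp d) (x : Fin d → ℤ) :
    unW d k f x = (jap x ^ k : ℝ)⁻¹ • f x := rfl

lemma unW_lapW {d k : ℕ} (f : Hsp d) : unW d k (lapW d k f) = lapW d 0 (unW d k f) := by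
  ext x
  rw [unW_apply, lapW_apply, lapW_apply, inv_smul_smul₀ (wt_pos k x).ne']
  simp [unW_apply]

/-- The discrete gradient component `Dⱼ u(x) = u(x + eⱼ) - u(x)`. -/
def grad (d : ℕ) (j : Fin d) : Hsp d →L[ℝ] Hsp d :=
  shiftW 0 j 1 (by norm_num) - ContinuousLinearMap.id ℝ (Hsp d)

lemma inner_shift {d : ℕ} (j : Fin d) (f g : Hsp d) :
    inner ℝ f (shiftW 0 j 1 (by norm_num) g) = inner ℝ (shiftW 0 j (-1) (by norm_num) f) g := by
  rw [lp.inner_eq_tsum, lp.inner_eq_tsum,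
    ← (Equiv.addRight (Pi.single j (-1) : Fin d → ℤ)).tsum_eq]
  refine tsum_congr fun x ↦ ?_
  simp [shiftW, add_assoc, ← Pi.single_add]

lemma inner_shift_shift {d : ℕ} (j : Fin d) (f g : Hsp d) :
    inner ℝ (shiftW 0 j 1 (by norm_num) f) (shiftW 0 j 1 (by norm_num) g) = inner ℝ f g := by
  rw [inner_shift]
  congr 1
  ext x
  simp [shiftW, add_assoc, ← Pi.single_add]

/-- Summation by parts: `-Δ = ∑ Dⱼ* Dⱼ`. -/
lemma inner_lap {d : ℕ} (f g : Hsp d) :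
    inner ℝ (lapW d 0 f) g = -∑ j, inner ℝ (grad d j f) (grad d j g) := by
  rw [lapW, _root_.sum_apply, sum_inner, ← Finset.sum_neg_distrib]
  refine Finset.sum_congr rfl fun j _ ↦ ?_
  simp only [grad, _root_.sub_apply, _root_.add_apply,
    _root_.smul_apply, ContinuousLinearMap.id_apply, inner_sub_left, inner_add_left,
    inner_sub_right, inner_shift_shift, real_inner_smul_left, ← inner_shift]
  ring

/-- The truncated nonlinearity acting on weighted functions: `⟨x⟩^k n(⟨x⟩^{-k} f(x))`. -/
def nonlin (d k : ℕ) {p A : ℝ} (hp : 1 < p) (hA : 0 ≤ A) (f : Hsp d) : Hsp d :=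
  ⟨fun x ↦ (jap x ^ k : ℝ) • trunc p A ((jap x ^ k : ℝ)⁻¹ • f x),
    (dominated f (Equiv.refl _) _ (C := A ^ (p - 1)) (Real.rpow_nonneg hA _) (fun x ↦ by
      have h := norm_trunc_le hp hA ((jap x ^ k : ℝ)⁻¹ • f x)
      have hw := wt_pos k x
      rw [norm_smul, norm_inv, Real.norm_of_nonneg hw.le] at h
      rw [norm_smul, Real.norm_of_nonneg hw.le]
      refine (mul_le_mul_of_nonneg_left h hw.le).trans (le_of_eq ?_)
      rw [Equiv.refl_apply]
      field_simp)).1⟩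

lemma nonlin_apply {d k : ℕ} {p A : ℝ} (hp : 1 < p) (hA : 0 ≤ A) (f : Hsp d) (x : Fin d → ℤ) :
    nonlin d k hp hA f x = (jap x ^ k : ℝ) • trunc p A ((jap x ^ k : ℝ)⁻¹ • f x) := rfl

lemma nonlin_lipschitz (d k : ℕ) {p A : ℝ} (hp : 1 < p) (hA : 0 ≤ A) :
    LipschitzWith ((1 + p) * A ^ (p - 1)).toNNReal (nonlin d k hp hA) := by
  have hc : 0 ≤ (1 + p) * A ^ (p - 1) := mul_nonneg (by linarith) (Real.rpow_nonneg hA _)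
  refine LipschitzWith.of_dist_le_mul fun f g ↦ ?_
  rw [dist_eq_norm, dist_eq_norm, Real.coe_toNNReal _ hc]
  refine (dominated (f - g) (Equiv.refl _) (nonlin d k hp hA f - nonlin d k hp hA g : Hsp d)
    hc fun x ↦ ?_).2
  have h := trunc_sub_le hp hA ((jap x ^ k : ℝ)⁻¹ • f x) ((jap x ^ k : ℝ)⁻¹ • g x)
  have hw := wt_pos k x
  rw [← smul_sub, norm_smul, norm_inv, Real.norm_of_nonneg hw.le] at h
  rw [lp.coeFn_sub, Pi.sub_apply, nonlin_apply, nonlin_apply, ← smul_sub, norm_smul,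
    Real.norm_of_nonneg hw.le, lp.coeFn_sub, Pi.sub_apply, Equiv.refl_apply]
  refine (mul_le_mul_of_nonneg_left h hw.le).trans (le_of_eq ?_)
  field_simp

lemma norm_nonlin_le {d : ℕ} {p A : ℝ} (hp : 1 < p) (hA : 0 ≤ A) (f : Hsp d) :
    ‖nonlin d 0 hp hA f‖ ≤ A ^ (p - 1) * ‖f‖ := by
  refine (dominated f (Equiv.refl _) (nonlin d 0 hp hA f) (Real.rpow_nonneg hA _) fun x ↦ ?_).2
  simpa [nonlin_apply] using norm_trunc_le hp hA (f x)

lemma unW_nonlin {d k : ℕ} {p A : ℝ} (hp : 1 < p) (hA : 0 ≤ A) (f : Hsp d) :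
    unW d k (nonlin d k hp hA f) = nonlin d 0 hp hA (unW d k f) := by
  ext x
  rw [unW_apply, nonlin_apply, nonlin_apply, inv_smul_smul₀ (wt_pos k x).ne']
  simp [unW_apply]

/-! ### Curves in the weighted space -/

/-- `h ↦ ⟨m⟩^{-k} h` is an isometry from `ℓ²` to `ℓ^{2,k}`. -/
lemma w2_eq {d k : ℕ} (f : Hsp d) :
    w2 k (fun m ↦ (jap m ^ k : ℝ)⁻¹ • f m) = ‖f‖ₑ := by
  have h2 : (0 : ℝ) < (2 : ℝ≥0∞).toReal := by norm_num
  have e : (fun m ↦ ((jap m ^ k : ℝ) : ℂ) * ((jap m ^ k : ℝ)⁻¹ • f m)) = f := by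
    funext m
    rw [← Complex.real_smul, smul_inv_smul₀ (wt_pos k m).ne']
  rw [w2, e, lpn, if_neg (by simp), ← ofReal_norm, lp.norm_eq_tsum_rpow h2,
    ← ENNReal.ofReal_rpow_of_nonneg (tsum_nonneg fun x ↦ by positivity) (by norm_num),
    ENNReal.ofReal_tsum_of_nonneg (fun x ↦ by positivity) (lp.hasSum_norm h2 f).summable]
  congr 2
  funext m
  rw [← ENNReal.ofReal_rpow_of_nonneg (norm_nonneg _) h2.le, ofReal_norm, enorm_eq_nnnorm]

/-- Every element of `ℓ^{2,k}` is `⟨m⟩^{-k} h` for some `h ∈ ℓ²`. -/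
lemma exists_of_w2 {d k : ℕ} {f : (Fin d → ℤ) → ℂ} (hf : w2 k f < ⊤) :
    ∃ h : Hsp d, ∀ m, f m = (jap m ^ k : ℝ)⁻¹ • h m := by
  have h2 : (0 : ℝ) < (2 : ℝ≥0∞).toReal := by norm_num
  refine ⟨⟨fun m ↦ (jap m ^ k : ℝ) • f m, memℓp_gen ?_⟩, fun m ↦ ?_⟩
  · rw [w2, lpn, if_neg (by simp), ENNReal.rpow_lt_top_iff_of_pos (by norm_num)] at hf
    have := ENNReal.summable_toReal hf.ne
    refine this.congr fun m ↦ ?_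
    rw [← ENNReal.toReal_rpow, Complex.real_smul]
    simp
  · exact (inv_smul_smul₀ (wt_pos k m).ne' _).symm

/-- A `C²` curve in `ℓ²`, divided by the weight, is a `C²` curve in `ℓ^{2,k}`. -/
lemma isC2_of {d k : ℕ} {S : Set ℝ} {U V W : ℝ → Hsp d}
    (hU : ∀ t ∈ S, HasDerivWithinAt U (V t) S t) (hV : ∀ t ∈ S, HasDerivWithinAt V (W t) S t)
    (hW : ContinuousOn W S) :
    IsC2 k S (fun t m ↦ (jap m ^ k : ℝ)⁻¹ • U t m) (fun t m ↦ (jap m ^ k : ℝ)⁻¹ • V t m)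
      (fun t m ↦ (jap m ^ k : ℝ)⁻¹ • W t m) := by
  have hmem : ∀ h : Hsp d, w2 k (fun m ↦ (jap m ^ k : ℝ)⁻¹ • h m) < ⊤ := fun h ↦ by
    rw [w2_eq]; exact enorm_lt_top
  have hcont : ∀ X : ℝ → Hsp d, ContinuousOn X S →
      ContW k S (fun t m ↦ (jap m ^ k : ℝ)⁻¹ • X t m) := by
    intro X hX t ht
    have e : ∀ s, w2 k (fun m ↦ (jap m ^ k : ℝ)⁻¹ • X s m - (jap m ^ k : ℝ)⁻¹ • X t m)
        = ‖X s - X t‖ₑ := fun s ↦ by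
      rw [← w2_eq (k := k)]
      simp [smul_sub]
    simp only [e]
    have := ((hX t ht).sub (continuousWithinAt_const (b := X t))).enorm
    simpa [ContinuousWithinAt] using this
  have hderiv : ∀ X Y : ℝ → Hsp d, (∀ t ∈ S, HasDerivWithinAt X (Y t) S t) →
      DerivW k S (fun t m ↦ (jap m ^ k : ℝ)⁻¹ • X t m) (fun t m ↦ (jap m ^ k : ℝ)⁻¹ • Y t m) := by
    intro X Y hX t ht
    have e : ∀ s, w2 k (fun m ↦ (s - t)⁻¹ • ((jap m ^ k : ℝ)⁻¹ • X s m - (jap m ^ k : ℝ)⁻¹ • X t m)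
        - (jap m ^ k : ℝ)⁻¹ • Y t m) = ‖slope X t s - Y t‖ₑ := fun s ↦ by
      rw [← w2_eq (k := k)]
      congr 1
      funext m
      simp only [slope_def_module, lp.coeFn_sub, lp.coeFn_smul, Pi.sub_apply, Pi.smul_apply,
        smul_sub]
      rw [smul_comm, smul_comm (s - t)⁻¹]
    simp only [e]
    have := ((hasDerivWithinAt_iff_tendsto_slope.1 (hX t ht)).sub_const (Y t)).enorm
    simpa using this
  exact ⟨fun _ _ ↦ hmem _, fun _ _ ↦ hmem _, fun _ _ ↦ hmem _,
    hcont U fun t ht ↦ (hU t ht).continuousWithinAt,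
    hcont V fun t ht ↦ (hV t ht).continuousWithinAt, hcont W hW, hderiv U V hU, hderiv V W hV⟩

/-! ### Lifespan -/

/-- Choice of the truncation height `A` and of the lifespan constant: `A` dominates the bound
`2 (‖u(0)‖ + T E₀)` of the energy estimate while `4 A^{p-1} T² ≤ 1`. -/
lemma scaling {p a G : ℝ} (hp : 1 < p) (ha : 0 ≤ a) (hG : 0 ≤ G) :
    ∃ K : ℝ, 0 < K ∧ ∀ ε : ℝ, 0 < ε → ε < 1 → ∀ T : ℝ, 0 < T →
      T < K * (1 / ε) ^ ((p - 1) / (p + 1)) →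
      ∃ A : ℝ, 0 ≤ A ∧ 2 * (ε * a + T * (ε * G)) ≤ A ∧ 4 * (A ^ (p - 1) * T ^ 2) ≤ 1 := by
  set C : ℝ := a + G + 1 with hC
  have hC0 : 0 < C := by positivity
  set Q : ℝ := (4 * C) ^ (p - 1) with hQ
  have hQ0 : 0 < Q := by positivity
  refine ⟨1 / (2 * (1 + Q)), by positivity, fun ε hε hε1 T hT hTK ↦ ?_⟩
  set R : ℝ := (1 / ε) ^ ((p - 1) / (p + 1)) with hR
  have hR1 : 1 ≤ R :=
    Real.one_le_rpow ((one_le_div hε).2 hε1.le) (div_nonneg (by linarith) (by linarith))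
  have hR0 : 0 < R := by linarith
  have hK1 : 1 / (2 * (1 + Q)) ≤ 1 := by
    rw [div_le_one (by positivity)]; linarith
  have hTR : T ≤ R := hTK.le.trans (mul_le_of_le_one_left hR0.le hK1)
  set A : ℝ := 4 * C * (ε * R) with hA
  have hA0 : 0 ≤ A := by positivity
  have hAbd : 2 * (ε * a + T * (ε * G)) ≤ A := by
    have h1 : T * (ε * G) ≤ R * (ε * G) := by gcongr
    have h2 : ε * a ≤ R * (ε * a) := le_mul_of_one_le_left (by positivity) hR1
    have h3 : 0 ≤ ε * R * (a + G + 2) := by positivity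
    rw [hA, hC]
    nlinarith
  -- The exponent in the lifespan is the one for which `R² (ε R)^{p-1} = 1`.
  have hscale : (ε * R) ^ (p - 1) * R ^ 2 = 1 := by
    have h1 : R ^ (p + 1) = (1 / ε) ^ (p - 1) := by
      rw [hR, ← Real.rpow_mul (by positivity), div_mul_cancel₀ _ (by linarith)]
    have h2 : R ^ (p + 1) = R ^ (p - 1) * R ^ 2 := by
      rw [← Real.rpow_natCast R 2, ← Real.rpow_add hR0]
      congr 1
      push_cast
      ring
    rw [Real.mul_rpow hε.le hR0.le, mul_assoc, ← h2, h1, ← Real.mul_rpow hε.le (by positivity),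
      mul_one_div_cancel hε.ne', Real.one_rpow]
  have hbT : 4 * (A ^ (p - 1) * T ^ 2) ≤ 1 := by
    have h1 : A ^ (p - 1) = Q * (ε * R) ^ (p - 1) := by
      rw [hA, Real.mul_rpow (by positivity) (by positivity)]
    have h2 : T ^ 2 ≤ (1 / (2 * (1 + Q))) ^ 2 * R ^ 2 := by
      rw [← mul_pow]; gcongr
    have h3 : A ^ (p - 1) * T ^ 2 ≤ A ^ (p - 1) * ((1 / (2 * (1 + Q))) ^ 2 * R ^ 2) := by gcongr
    have h4 : A ^ (p - 1) * ((1 / (2 * (1 + Q))) ^ 2 * R ^ 2) = Q * (1 / (2 * (1 + Q))) ^ 2 := by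
      rw [h1]; linear_combination Q * (1 / (2 * (1 + Q))) ^ 2 * hscale
    have h5 : 4 * (Q * (1 / (2 * (1 + Q))) ^ 2) ≤ 1 := by
      have : 4 * (Q * (1 / (2 * (1 + Q))) ^ 2) = Q / (1 + Q) ^ 2 := by field_simp; norm_num
      rw [this, div_le_one (by positivity)]
      nlinarith
    linarith
  exact ⟨A, hA0, hAbd, hbT⟩

/-- Existence on `[0, T]` once the energy estimate fits below a truncation height `A`. -/
lemma exists_sol {d k : ℕ} {p : ℝ} (hp : 1 < p) (f₀ g₀ : Hsp d) {ε T A G : ℝ} (hε : 0 < ε)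
    (hT : 0 < T) (hA0 : 0 ≤ A) (hG0 : 0 ≤ G)
    (hGsq : G ^ 2 = ‖unW d k g₀‖ ^ 2 + ∑ j, ‖grad d j (unW d k f₀)‖ ^ 2)
    (hAbd : 2 * (ε * ‖unW d k f₀‖ + T * (ε * G)) ≤ A) (hbT : 4 * (A ^ (p - 1) * T ^ 2) ≤ 1) :
    ∃ u u1 u2, PSol d k p 1 (fun m ↦ (ε : ℂ) * ((jap m ^ k : ℝ)⁻¹ • f₀ m))
      (fun m ↦ (ε : ℂ) * ((jap m ^ k : ℝ)⁻¹ • g₀ m)) (Set.Icc 0 T) u u1 u2 := by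
  -- Global solution `(U, V)` of the truncated system for the weighted unknown `U = ⟨x⟩^k u`.
  have hlip : LipschitzWith _ (fun z : Hsp d × Hsp d ↦
      (z.2, lapW d k z.1 + nonlin d k hp hA0 z.1)) :=
    LipschitzWith.prod_snd.prodMk
      (((lapW d k).lipschitz.add (nonlin_lipschitz d k hp hA0)).comp LipschitzWith.prod_fst)
  obtain ⟨α, hα0, hα⟩ := ode_global hlip (ε • f₀, ε • g₀) T
  have hU : ∀ t ∈ Set.Icc 0 T, HasDerivWithinAt (fun t ↦ (α t).1) (α t).2 (Set.Icc 0 T) t :=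
    fun t ht ↦ (ContinuousLinearMap.fst ℝ (Hsp d) (Hsp d)).hasFDerivAt.comp_hasDerivWithinAt t
      (hα t ht)
  have hV : ∀ t ∈ Set.Icc 0 T, HasDerivWithinAt (fun t ↦ (α t).2)
      (lapW d k (α t).1 + nonlin d k hp hA0 (α t).1) (Set.Icc 0 T) t :=
    fun t ht ↦ (ContinuousLinearMap.snd ℝ (Hsp d) (Hsp d)).hasFDerivAt.comp_hasDerivWithinAt t
      (hα t ht)
  have hcU : ContinuousOn (fun t ↦ (α t).1) (Set.Icc 0 T) :=
    fun t ht ↦ (hU t ht).continuousWithinAt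
  have hW : ContinuousOn (fun t ↦ lapW d k (α t).1 + nonlin d k hp hA0 (α t).1) (Set.Icc 0 T) :=
    ((lapW d k).continuous.comp_continuousOn hcU).add
      ((nonlin_lipschitz d k hp hA0).continuous.comp_continuousOn hcU)
  -- The unweighted energy bound keeps `|u|` below the truncation height.
  have hbound : ∀ t ∈ Set.Icc 0 T, ‖unW d k (α t).1‖ ≤ A := by
    have key := energy_bound (lapW d 0) (grad d) inner_lap hT.le (Real.rpow_nonneg hA0 (p - 1))
      (E₀ := ε * G) (by positivity) hbT (u := fun t ↦ unW d k (α t).1)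
      (v := fun t ↦ unW d k (α t).2) (N := fun t ↦ nonlin d 0 hp hA0 (unW d k (α t).1))
      (fun t ht ↦ (unW d k).hasFDerivAt.comp_hasDerivWithinAt t (hU t ht))
      (fun t ht ↦ by
        have := (unW d k).hasFDerivAt.comp_hasDerivWithinAt t (hV t ht)
        rw [map_add, unW_lapW, unW_nonlin] at this
        exact this)
      (fun t _ ↦ norm_nonlin_le hp hA0 _)
      (by
        simp only [hα0, map_smul, norm_smul, Real.norm_of_nonneg hε.le, mul_pow, hGsq,
          mul_add, Finset.mul_sum]
        exact le_rfl)
    intro t ht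
    refine (key t ht).trans ?_
    simpa only [hα0, map_smul, norm_smul, Real.norm_of_nonneg hε.le] using hAbd
  refine ⟨_, _, _, isC2_of hU hV hW, fun t ht x ↦ ?_, fun x ↦ ?_, fun x ↦ ?_⟩
  · have hx : ‖(jap x ^ k : ℝ)⁻¹ • (α t).1 x‖ ≤ A :=
      (lp.norm_apply_le_norm two_ne_zero (unW d k (α t).1) x).trans (hbound t ht)
    simp only [lp.coeFn_add, Pi.add_apply, smul_add]
    rw [lapW_apply, nonlin_apply, inv_smul_smul₀ (wt_pos k x).ne',
      inv_smul_smul₀ (wt_pos k x).ne', add_sub_cancel_left, trunc, min_eq_left hx,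
      Complex.ofReal_one, one_mul, Complex.real_smul]
  · simp only [hα0, lp.coeFn_smul, Pi.smul_apply]
    rw [smul_comm, Complex.real_smul]
  · simp only [hα0, lp.coeFn_smul, Pi.smul_apply]
    rw [smul_comm, Complex.real_smul]

/-- for the focusing equation `∂ₜ²u - Δu = |u|^{p-1}u` with small data
`εf, εg`, the maximal existence time satisfies `T*(ε) ≥ K·(1/ε)^{(p-1)/(p+1)}`,
i.e. a classical solution exists on `[0,T]` for every `T < K·(1/ε)^{(p-1)/(p+1)}`. -/
theorem stmt15 (d : ℕ) (hd : 0 < d) (k : ℕ) (hk : k = 0 ∨ k = 1) (p : ℝ) (hp : 1 < p)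
    (f g : (Fin d → ℤ) → ℂ) (hf : w2 k f < ⊤) (hg : w2 k g < ⊤) :
    ∃ K : ℝ, 0 < K ∧ ∃ δ : ℝ, 0 < δ ∧
      ∀ ε : ℝ, 0 < ε → ε < δ →
        ∀ T : ℝ, 0 < T → T < K * (1 / ε) ^ ((p - 1) / (p + 1)) →
          ∃ u u1 u2,
            PSol d k p 1 (fun m => (ε : ℂ) * f m) (fun m => (ε : ℂ) * g m)
              (Set.Icc 0 T) u u1 u2 := by
  obtain ⟨f₀, hf₀⟩ := exists_of_w2 hf
  obtain ⟨g₀, hg₀⟩ := exists_of_w2 hg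
  obtain rfl : f = _ := funext hf₀
  obtain rfl : g = _ := funext hg₀
  have hGsq := Real.sq_sqrt (add_nonneg (sq_nonneg ‖unW d k g₀‖)
    (Finset.sum_nonneg fun (j : Fin d) (_ : j ∈ Finset.univ) ↦
      sq_nonneg ‖grad d j (unW d k f₀)‖))
  obtain ⟨K, hK, h⟩ := scaling hp (norm_nonneg (unW d k f₀)) (Real.sqrt_nonneg _)
  refine ⟨K, hK, 1, one_pos, fun ε hε hε1 T hT hTK ↦ ?_⟩
  obtain ⟨A, hA0, hAbd, hbT⟩ := h ε hε hε1 T hT hTK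
  exact exists_sol hp f₀ g₀ hε hT hA0 (Real.sqrt_nonneg _) hGsq hAbd hbT
end
end

section
/- Let k ∈ {0,1}, p > 1, and f, g ∈ ℓ^{2,k}(ℤ^d). Then the defocusing semilinear wave equation ∂_t² u(x,t) − Δu(x,t) = −|u(x,t)|^{p−1}u(x,t) on ℤ^d with initial data u(·,0) = f, ∂_t u(·,0) = g has a unique global classical solution: for every T > 0 there is a unique u ∈ C²([0,T]; ℓ^{2,k}(ℤ^d)) satisfying the equation on ℤ^d × [0,T] with these initial data. -/
/-!
The nonlinearity is first truncated to `min(|u|, R)^{p-1} u`. This is globally Lipschitz on `ℂ`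
(`amp_lipschitz`), and translations are bounded on `ℓ^{2,k}` (`jap_shift`), so after conjugation by
the weight `⟨m⟩^k` the truncated equation is a first order system on `ℓ² × ℓ²` with a globally
Lipschitz vector field (`exists_field`). It therefore has a solution on `[0,T]` for every `R`
(`global_ode`, `exists_cutoff`).

To remove the truncation, consider at each site the energy `|∂ₜu|² + |u|² + pot(|u|²)`, where `pot`
is the primitive of the truncated amplitude. The defocusing sign makes `pot` nonnegative and
cancels the nonlinear term in the time derivative, leaving only terms bounded by `8d + 2` times the
supremum over all sites of the energy. A Grönwall argument for suprema (`sup_gronwall`) bounds `|u|`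
on `[0,T]` by a constant depending on `f`, `g`, `p`, `d`, `T` but not on `R` (`apriori`). Taking that
constant for `R`, the truncation is never active and the solution solves the original equation.

Uniqueness (`psol_unique`) holds because two solutions are bounded, hence solve a common truncated
equation, and `sup_gronwall` applied to `|∂ₜw|² + |w|²` for their difference `w` forces `w = 0`.
-/


open scoped BigOperators ENNReal NNReal
open MeasureTheory Filter

noncomputable section

/-! ### The cut-off nonlinearity -/

/-- The cut-off amplitude `min(r, R)^{p-1}`, equal to `r^{p-1}` for `r ≤ R`. -/
def amp (p R r : ℝ) : ℝ := min r R ^ (p - 1)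

lemma amp_nonneg {p R r : ℝ} (hR : 0 ≤ R) (hr : 0 ≤ r) : 0 ≤ amp p R r :=
  Real.rpow_nonneg (le_min hr hR) _

lemma amp_of_le {p R r : ℝ} (h : r ≤ R) : amp p R r = r ^ (p - 1) := by
  rw [amp, min_eq_left h]

/-- The cut-off nonlinearity `z ↦ min(|z|, R)^{p-1} z` is globally Lipschitz. The variation of the
amplitude is controlled by Bernoulli's inequality `b^p - a^p ≤ p b^{p-1} (b - a)`. -/
lemma amp_lipschitz {p R : ℝ} (hp : 1 < p) (hR : 0 ≤ R) (z w : ℂ) :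
    ‖(amp p R ‖z‖ : ℂ) * z - (amp p R ‖w‖ : ℂ) * w‖ ≤ (1 + p) * R ^ (p - 1) * ‖z - w‖ := by
  wlog hzw : ‖w‖ ≤ ‖z‖ generalizing z w
  · rw [norm_sub_rev, norm_sub_rev z w]
    exact this w z (le_of_not_ge hzw)
  have hp1 : 0 ≤ p - 1 := by linarith
  have hzR : amp p R ‖z‖ ≤ R ^ (p - 1) :=
    Real.rpow_le_rpow (le_min (norm_nonneg _) hR) (min_le_right _ _) hp1
  have hsplit : (amp p R ‖z‖ : ℂ) * z - (amp p R ‖w‖ : ℂ) * w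
      = (amp p R ‖z‖ : ℂ) * (z - w) + ((amp p R ‖z‖ - amp p R ‖w‖ : ℝ) : ℂ) * w := by
    push_cast; ring
  have hmono : amp p R ‖w‖ ≤ amp p R ‖z‖ :=
    Real.rpow_le_rpow (le_min (norm_nonneg _) hR) (min_le_min_right _ hzw) hp1
  have hdist : ‖z‖ - ‖w‖ ≤ ‖z - w‖ := norm_sub_norm_le z w
  have h2 : (amp p R ‖z‖ - amp p R ‖w‖) * ‖w‖ ≤ p * R ^ (p - 1) * ‖z - w‖ := by
    rcases le_total R ‖w‖ with hRw | hwR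
    · have : amp p R ‖z‖ = amp p R ‖w‖ := by
        rw [amp, amp, min_eq_right hRw, min_eq_right (hRw.trans hzw)]
      rw [this, sub_self, zero_mul]
      positivity
    · rw [amp_of_le hwR]
      unfold amp
      set b := min ‖z‖ R with hb
      set a := ‖w‖ with ha
      have ha0 : 0 ≤ a := norm_nonneg _
      have hab : a ≤ b := le_min hzw hwR
      have hbz : b ≤ ‖z‖ := min_le_left _ _
      have hbR : b ≤ R := min_le_right _ _
      rcases eq_or_lt_of_le (ha0.trans hab) with hb0 | hb0
      · have : a = 0 := le_antisymm (hab.trans hb0.symm.le) ha0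
        rw [this, mul_zero]; positivity
      have hber := one_add_mul_self_le_rpow_one_add (s := a / b - 1)
        (by have : 0 ≤ a / b := by positivity
            linarith) hp.le
      have e1 : (1 + (a / b - 1)) ^ p = a ^ p / b ^ p := by
        rw [← Real.div_rpow ha0 hb0.le]; congr 1; ring
      have hbp : b ^ p = b ^ (p - 1) * b := by
        rw [← Real.rpow_add_one hb0.ne']; congr 1; ring
      have hap : a ^ p = a ^ (p - 1) * a := by
        rcases eq_or_lt_of_le ha0 with h0 | h0
        · rw [← h0, mul_zero, Real.zero_rpow (by linarith)]
        · rw [← Real.rpow_add_one h0.ne']; congr 1; ring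
      have hbpos : 0 < b ^ (p - 1) := Real.rpow_pos_of_pos hb0 _
      rw [e1, hap, hbp, le_div_iff₀ (by positivity)] at hber
      have e2 : (1 + p * (a / b - 1)) * (b ^ (p - 1) * b)
          = b ^ (p - 1) * b - p * b ^ (p - 1) * (b - a) := by
        field_simp; ring
      rw [e2] at hber
      have h3 : b ^ (p - 1) ≤ R ^ (p - 1) := Real.rpow_le_rpow hb0.le hbR hp1
      calc (b ^ (p - 1) - a ^ (p - 1)) * a ≤ p * b ^ (p - 1) * (b - a) := by nlinarith
        _ ≤ p * R ^ (p - 1) * ‖z - w‖ := by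
          have : b - a ≤ ‖z - w‖ := by linarith
          have h0 : 0 ≤ b - a := by linarith
          gcongr
  rw [hsplit]
  refine (norm_add_le _ _).trans ?_
  rw [norm_mul, norm_mul, Complex.norm_real, Complex.norm_real, Real.norm_of_nonneg
    (amp_nonneg hR (norm_nonneg _)), Real.norm_of_nonneg (sub_nonneg.2 hmono)]
  have := mul_le_mul_of_nonneg_right hzR (norm_nonneg (z - w))
  linarith

/-! ### A Grönwall inequality for suprema -/

/-- A family of functions on `[0,T]` whose derivatives are controlled by a multiple of the supremum
of the family obeys a Grönwall bound. With `S` the supremum of `exp (-2Ct) e y t`, integrating the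
hypothesis gives `S ≤ E + S / 2`. -/
lemma sup_gronwall {X : Type*} {T C E : ℝ} (hC : 0 < C) (e e' : X → ℝ → ℝ)
    (hnn : ∀ y, ∀ t ∈ Set.Icc 0 T, 0 ≤ e y t)
    (hbdd : ∃ B, ∀ y, ∀ t ∈ Set.Icc 0 T, e y t ≤ B)
    (hder : ∀ y, ∀ t ∈ Set.Icc 0 T, HasDerivWithinAt (e y) (e' y t) (Set.Icc 0 T) t)
    (hle : ∀ t ∈ Set.Icc 0 T, ∀ M, (∀ y, e y t ≤ M) → ∀ y, e' y t ≤ C * M)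
    (h0 : ∀ y, e y 0 ≤ E) :
    ∀ y, ∀ t ∈ Set.Icc 0 T, e y t ≤ 2 * E * Real.exp (2 * C * T) := by
  intro y₀ t₀ ht₀
  obtain ⟨B, hB⟩ := hbdd
  set A : Set ℝ := {s | ∃ y, ∃ t ∈ Set.Icc 0 T, s = Real.exp (-(2 * C * t)) * e y t} with hA
  have hAb : BddAbove A := by
    refine ⟨B, ?_⟩
    rintro s ⟨y, t, ht, rfl⟩
    have h1 : Real.exp (-(2 * C * t)) ≤ 1 := by
      rw [Real.exp_le_one_iff]
      have := mul_nonneg hC.le ht.1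
      linarith
    have h2 := hnn y t ht
    have h3 := hB y t ht
    nlinarith
  set S := sSup A with hS
  have heS : ∀ y, ∀ t ∈ Set.Icc 0 T, e y t ≤ S * Real.exp (2 * C * t) := by
    intro y t ht
    have := le_csSup hAb ⟨y, t, ht, rfl⟩
    rw [Real.exp_neg, inv_mul_le_iff₀ (Real.exp_pos _)] at this
    linarith
  have hT : (0 : ℝ) ∈ Set.Icc 0 T := ⟨le_rfl, ht₀.1.trans ht₀.2⟩
  have hAne : A.Nonempty := ⟨_, y₀, t₀, ht₀, rfl⟩
  have hS0 : 0 ≤ S :=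
    le_csSup_of_le hAb ⟨y₀, t₀, ht₀, rfl⟩ (mul_nonneg (Real.exp_pos _).le (hnn y₀ t₀ ht₀))
  have hE0 : 0 ≤ E := (hnn y₀ 0 hT).trans (h0 y₀)
  have hder2 : ∀ t : ℝ, HasDerivAt (fun t => E + S / 2 * (Real.exp (2 * C * t) - 1))
      (C * (S * Real.exp (2 * C * t))) t := by
    intro t
    have h1 : HasDerivAt (fun t : ℝ => 2 * C * t) (2 * C) t := by
      simpa using (hasDerivAt_id t).const_mul (2 * C)
    have h2 := (((h1.exp).sub_const 1).const_mul (S / 2)).const_add E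
    refine h2.congr_deriv ?_
    ring
  have key : ∀ y, ∀ t ∈ Set.Icc 0 T, e y t ≤ E + S / 2 * (Real.exp (2 * C * t) - 1) := by
    intro y
    refine image_le_of_deriv_right_le_deriv_boundary (f' := e' y)
      (B' := fun t => C * (S * Real.exp (2 * C * t)))
      (fun t ht => (hder y t ht).continuousWithinAt) ?_ (by simpa using h0 y)
      (fun t _ => (hder2 t).continuousAt.continuousWithinAt)
      (fun t _ => (hder2 t).hasDerivWithinAt) ?_
    · intro t ht
      exact (hder y t ⟨ht.1, ht.2.le⟩).mono_of_mem_nhdsWithin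
        (mem_of_superset (Icc_mem_nhdsGE ht.2) (Set.Icc_subset_Icc_left ht.1))
    · intro t ht
      exact hle t ⟨ht.1, ht.2.le⟩ _ (fun z => heS z t ⟨ht.1, ht.2.le⟩) y
  have hSE : S ≤ E + S / 2 := by
    refine csSup_le hAne ?_
    rintro s ⟨y, t, ht, rfl⟩
    rw [Real.exp_neg, inv_mul_le_iff₀ (Real.exp_pos _)]
    have h1 : 1 ≤ Real.exp (2 * C * t) := by
      rw [Real.one_le_exp_iff]; exact mul_nonneg (by linarith) ht.1
    have := key y t ht
    nlinarith
  have h2 : Real.exp (2 * C * t₀) ≤ Real.exp (2 * C * T) := by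
    rw [Real.exp_le_exp]; exact mul_le_mul_of_nonneg_left ht₀.2 (by linarith)
  calc e y₀ t₀ ≤ S * Real.exp (2 * C * t₀) := heS y₀ t₀ ht₀
    _ ≤ 2 * E * Real.exp (2 * C * T) := by
      have : S ≤ 2 * E := by linarith
      gcongr

/-! ### Global existence for Lipschitz vector fields -/

/-- Global existence on `[0,T]` for an autonomous globally Lipschitz vector field vanishing at the
origin. The Picard–Lindelöf theorem applies to the bounded field `θ(x) F(x)`, where `θ` is a radial
cut-off at a radius `ρ` which, by Grönwall's inequality, the solution does not reach. -/
lemma global_ode {E : Type*} [NormedAddCommGroup E] [NormedSpace ℝ E] [CompleteSpace E]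
    {F : E → E} {K : ℝ≥0} (hF : LipschitzWith K F) (hF0 : F 0 = 0) (x₀ : E) {T : ℝ} (hT : 0 ≤ T) :
    ∃ α : ℝ → E, α 0 = x₀ ∧
      ∀ t ∈ Set.Icc 0 T, HasDerivWithinAt α (F (α t)) (Set.Icc 0 T) t := by
  set ρ : ℝ := ‖x₀‖ * Real.exp (K * T) + 1 with hρ
  have hρ0 : 0 < ρ := by positivity
  set θ : E → ℝ := fun x => max 0 (min 1 (2 - ‖x‖ / ρ)) with hθ
  have hθ0 : ∀ x, 0 ≤ θ x := fun x => le_max_left _ _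
  have hθ1 : ∀ x, θ x ≤ 1 := fun x => max_le zero_le_one (min_le_left _ _)
  have hθbig : ∀ x, 2 * ρ ≤ ‖x‖ → θ x = 0 := by
    intro x hx
    have : 2 ≤ ‖x‖ / ρ := by rwa [le_div_iff₀ hρ0]
    exact max_eq_left ((min_le_right _ _).trans (by linarith))
  have hθsmall : ∀ x, ‖x‖ ≤ ρ → θ x = 1 := by
    intro x hx
    have : ‖x‖ / ρ ≤ 1 := by rwa [div_le_one hρ0]
    simp only [hθ]
    rw [min_eq_left (by linarith), max_eq_right zero_le_one]
  have hθlip : ∀ x y, |θ x - θ y| ≤ ‖x - y‖ / ρ := by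
    intro x y
    simp only [hθ]
    have h1 := abs_max_sub_max_le_abs (min 1 (2 - ‖x‖ / ρ)) (min 1 (2 - ‖y‖ / ρ)) 0
    have h2 := abs_min_sub_min_le_max 1 (2 - ‖x‖ / ρ) 1 (2 - ‖y‖ / ρ)
    rw [sub_self, abs_zero, max_eq_right (abs_nonneg _)] at h2
    rw [max_comm 0, max_comm 0]
    refine (h1.trans h2).trans ?_
    have : (2 - ‖x‖ / ρ) - (2 - ‖y‖ / ρ) = (‖y‖ - ‖x‖) / ρ := by ring
    rw [this, abs_div, abs_of_pos hρ0, norm_sub_rev]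
    gcongr
    exact abs_norm_sub_norm_le y x
  have hFK : ∀ x, ‖F x‖ ≤ K * ‖x‖ := by
    intro x
    have := hF.dist_le_mul x 0
    simpa [hF0, dist_eq_norm] using this
  set G : E → E := fun x => θ x • F x with hG
  have hGK : ∀ x, ‖G x‖ ≤ K * ‖x‖ := by
    intro x
    rw [hG, norm_smul, Real.norm_of_nonneg (hθ0 x)]
    exact (mul_le_of_le_one_left (norm_nonneg _) (hθ1 x)).trans (hFK x)
  have hGb : ∀ x, ‖G x‖ ≤ K * (2 * ρ) := by
    intro x
    rcases le_total (2 * ρ) ‖x‖ with h | h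
    · simp only [hG, hθbig x h, zero_smul, norm_zero]; positivity
    · exact (hGK x).trans (by gcongr)
  have hGl' : ∀ x y, ‖y‖ ≤ 2 * ρ → ‖G x - G y‖ ≤ 3 * K * ‖x - y‖ := by
    intro x y hy
    have e : G x - G y = θ x • (F x - F y) + (θ x - θ y) • F y := by
      simp only [hG, smul_sub, sub_smul]; abel
    rw [e]
    refine (norm_add_le _ _).trans ?_
    rw [norm_smul, norm_smul, Real.norm_of_nonneg (hθ0 x), Real.norm_eq_abs]
    have h1 : ‖F x - F y‖ ≤ K * ‖x - y‖ := by
      simpa [dist_eq_norm] using hF.dist_le_mul x y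
    have h2 : θ x * ‖F x - F y‖ ≤ K * ‖x - y‖ :=
      (mul_le_of_le_one_left (norm_nonneg _) (hθ1 x)).trans h1
    have h3 : |θ x - θ y| * ‖F y‖ ≤ ‖x - y‖ / ρ * (K * (2 * ρ)) := by
      have := (hFK y).trans (show (K : ℝ) * ‖y‖ ≤ K * (2 * ρ) by gcongr)
      have h4 := hθlip x y
      gcongr
    have e3 : ‖x - y‖ / ρ * (K * (2 * ρ)) = 2 * K * ‖x - y‖ := by field_simp
    rw [e3] at h3
    linarith
  have hGl : LipschitzWith (3 * K) G := by
    refine LipschitzWith.of_dist_le_mul fun x y => ?_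
    rw [dist_eq_norm, dist_eq_norm]
    push_cast
    rcases le_total ‖y‖ (2 * ρ) with hy | hy
    · exact hGl' x y hy
    rcases le_total ‖x‖ (2 * ρ) with hx | hx
    · rw [norm_sub_rev, norm_sub_rev x y]; exact hGl' y x hx
    · simp only [hG, hθbig x hx, hθbig y hy, zero_smul, sub_zero, norm_zero]; positivity
  set L : ℝ≥0 := Real.toNNReal (K * (2 * ρ)) with hL
  have hLr : (L : ℝ) = K * (2 * ρ) := Real.coe_toNNReal _ (by positivity)
  have hpl : IsPicardLindelof (fun _ => G) (⟨0, le_rfl, hT⟩ : Set.Icc 0 T) x₀ (L * T.toNNReal) 0 L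
      (3 * K) := by
    refine IsPicardLindelof.of_time_independent (fun x _ => ?_) (hGl.lipschitzOnWith) ?_
    · rw [hLr]; exact hGb x
    · simp [hT]
  obtain ⟨α, hα0, hα⟩ := hpl.exists_eq_forall_mem_Icc_hasDerivWithinAt₀
  have hbound : ∀ t ∈ Set.Icc 0 T, ‖α t‖ ≤ ρ := by
    intro t ht
    have := norm_le_gronwallBound_of_norm_deriv_right_le (f := α) (f' := fun t => G (α t))
      (δ := ‖x₀‖) (K := K) (ε := 0) (a := 0) (b := T)
      (fun t ht => (hα t ht).continuousWithinAt)
      (fun t ht => (hα t ⟨ht.1, ht.2.le⟩).mono_of_mem_nhdsWithin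
        (mem_of_superset (Icc_mem_nhdsGE ht.2) (Set.Icc_subset_Icc_left ht.1)))
      (by rw [show α 0 = x₀ from hα0]) (fun t _ => by simpa using hGK (α t)) t ht
    rw [gronwallBound_ε0, sub_zero] at this
    have h2 : Real.exp (K * t) ≤ Real.exp (K * T) :=
      Real.exp_le_exp.2 (mul_le_mul_of_nonneg_left ht.2 K.2)
    have h3 := mul_le_mul_of_nonneg_left h2 (norm_nonneg x₀)
    linarith
  refine ⟨α, hα0, fun t ht => ?_⟩
  have := hα t ht
  simpa only [hG, hθsmall _ (hbound t ht), one_smul] using this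

/-! ### The weighted spaces -/

/-- The Hilbert space `ℓ²(ℤ^d)`; a function `f` of the weighted space `ℓ^{2,k}(ℤ^d)` is represented
in it by `m ↦ ⟨m⟩^k f(m)`. -/
abbrev Hd (d : ℕ) : Type := lp (fun _ : Fin d → ℤ => ℂ) 2

lemma wt_ne {d : ℕ} (k : ℕ) (m : Fin d → ℤ) : ((jap m ^ k : ℝ) : ℂ) ≠ 0 :=
  Complex.ofReal_ne_zero.2 (wt_pos k m).ne'

lemma norm_wt {d : ℕ} (k : ℕ) (m : Fin d → ℤ) : ‖((jap m ^ k : ℝ) : ℂ)‖ = jap m ^ k := by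
  rw [Complex.norm_real, Real.norm_of_nonneg (wt_pos k m).le]

/-- The triangle inequality for the weight: translating by a vector with a single nonzero entry `±1`
costs at most a factor `2`. -/
lemma jap_shift {d : ℕ} (j : Fin d) (c : ℤ) (hc : c ^ 2 = 1) (m : Fin d → ℤ) :
    jap m ≤ 2 * jap (m + Pi.single j c) := by
  have h4 : (2 : ℝ) = Real.sqrt 4 := by
    rw [show (4 : ℝ) = 2 ^ 2 by norm_num, Real.sqrt_sq (by norm_num)]
  have hc' : (c : ℝ) ^ 2 = 1 := by exact_mod_cast hc
  unfold jap
  rw [h4, ← Real.sqrt_mul (by norm_num)]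
  apply Real.sqrt_le_sqrt
  have h1 : ∑ i, ((m i : ℝ)) ^ 2 ≤
      ∑ i, (2 * (((m + Pi.single j c : Fin d → ℤ) i : ℝ)) ^ 2 +
        2 * (Pi.single j ((c : ℝ) ^ 2) : Fin d → ℝ) i) := by
    refine Finset.sum_le_sum fun i _ => ?_
    rcases eq_or_ne i j with rfl | h
    · simp only [Pi.add_apply, Pi.single_eq_same, Int.cast_add]
      nlinarith [sq_nonneg ((m i : ℝ) + 2 * c)]
    · simp only [Pi.add_apply, Pi.single_eq_of_ne h, add_zero, mul_zero]
      nlinarith [sq_nonneg (m i : ℝ)]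
  rw [Finset.sum_add_distrib, ← Finset.mul_sum, ← Finset.mul_sum,
    Finset.sum_pi_single' j _ Finset.univ, if_pos (Finset.mem_univ _), hc'] at h1
  have h2 : 0 ≤ ∑ i, (((m + Pi.single j c : Fin d → ℤ) i : ℝ)) ^ 2 :=
    Finset.sum_nonneg fun i _ => sq_nonneg _
  linarith

lemma w2_eq_tsum {d : ℕ} (k : ℕ) (f : (Fin d → ℤ) → ℂ) :
    w2 k f = (∑' m, ENNReal.ofReal (‖((jap m ^ k : ℝ) : ℂ) * f m‖ ^ 2)) ^ (1 / 2 : ℝ) := by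
  rw [w2, lpn, if_neg (by norm_num)]
  congr 1
  · refine tsum_congr fun m => ?_
    rw [ENNReal.toReal_ofNat, ENNReal.ofReal_pow (norm_nonneg _), ofReal_norm]
    norm_cast

lemma memlp_of_w2 {d : ℕ} {k : ℕ} {f : (Fin d → ℤ) → ℂ} (h : w2 k f < ⊤) :
    Memℓp (fun m => ((jap m ^ k : ℝ) : ℂ) * f m) 2 := by
  rw [w2_eq_tsum] at h
  have h1 : (∑' m, ENNReal.ofReal (‖((jap m ^ k : ℝ) : ℂ) * f m‖ ^ 2)) ≠ ⊤ := by
    intro htop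
    rw [htop, ENNReal.top_rpow_of_pos (by norm_num)] at h
    exact lt_irrefl _ h
  rw [memℓp_gen_iff (by norm_num)]
  have := ENNReal.summable_toReal h1
  refine this.congr fun m => ?_
  rw [ENNReal.toReal_ofReal (by positivity), ENNReal.toReal_ofNat]
  norm_cast

lemma w2_eq_norm {d : ℕ} {k : ℕ} {f : (Fin d → ℤ) → ℂ} (U : Hd d)
    (h : ∀ m, U m = ((jap m ^ k : ℝ) : ℂ) * f m) : w2 k f = ENNReal.ofReal ‖U‖ := by
  rw [w2_eq_tsum]
  have hs : Summable fun m => ‖U m‖ ^ 2 := by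
    have := (memℓp_gen_iff (p := 2) (by norm_num)).1 (lp.memℓp U)
    refine this.congr fun m => ?_
    rw [ENNReal.toReal_ofNat]; norm_cast
  have hn : ‖U‖ ^ 2 = ∑' m, ‖U m‖ ^ 2 := by
    have := lp.norm_rpow_eq_tsum (p := 2) (by norm_num) U
    rw [ENNReal.toReal_ofNat] at this
    exact_mod_cast this
  simp only [← h]
  rw [← ENNReal.ofReal_tsum_of_nonneg (fun _ => by positivity) hs, ← hn,
    ENNReal.ofReal_rpow_of_nonneg (by positivity) (by norm_num), ← Real.sqrt_eq_rpow,
    Real.sqrt_sq (norm_nonneg _)]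

lemma norm_le_w2 {d : ℕ} (k : ℕ) (f : (Fin d → ℤ) → ℂ) (m : Fin d → ℤ) :
    ENNReal.ofReal ‖f m‖ ≤ w2 k f := by
  rcases eq_or_ne (w2 k f) ⊤ with h | h
  · rw [h]; exact le_top
  have hmem := memlp_of_w2 (lt_top_iff_ne_top.2 h)
  rw [w2_eq_norm (⟨_, hmem⟩ : Hd d) (fun _ => rfl)]
  refine ENNReal.ofReal_le_ofReal ?_
  refine le_trans ?_ (lp.norm_apply_le_norm (by norm_num) (⟨_, hmem⟩ : Hd d) m)
  change ‖f m‖ ≤ ‖((jap m ^ k : ℝ) : ℂ) * f m‖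
  rw [norm_mul, norm_wt]
  exact le_mul_of_one_le_left (norm_nonneg _) (one_le_wt k m)

/-! ### The cut-off equation in the weighted spaces -/

/-- Finite sums of translates act boundedly on `ℓ²`: a function dominated pointwise by
`K ∑ᵢ |W ∘ σᵢ|`, with each `σᵢ` a bijection, lies in `ℓ²` with the corresponding norm bound. -/
lemma exists_lp_of_le {d : ℕ} {ι : Type*} [Fintype ι] (σ : ι → (Fin d → ℤ) ≃ (Fin d → ℤ)) {K : ℝ}
    (hK : 0 ≤ K) (W : Hd d) (v : (Fin d → ℤ) → ℂ)
    (hv : ∀ x, ‖v x‖ ≤ K * ∑ i, ‖W (σ i x)‖) :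
    ∃ V : Hd d, (∀ x, V x = v x) ∧ ‖V‖ ≤ K * Fintype.card ι * ‖W‖ := by
  have h2 : (2 : ℝ≥0∞).toReal = ((2 : ℕ) : ℝ) := by simp
  have hW : ∀ s : Finset (Fin d → ℤ), ∑ x ∈ s, ‖W x‖ ^ 2 ≤ ‖W‖ ^ 2 := by
    intro s
    have := lp.sum_rpow_le_norm_rpow (p := 2) (by norm_num) W s
    simpa only [h2, Real.rpow_natCast] using this
  have hsum : ∀ s : Finset (Fin d → ℤ),
      ∑ x ∈ s, ‖v x‖ ^ 2 ≤ (K * Fintype.card ι * ‖W‖) ^ 2 := by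
    intro s
    calc ∑ x ∈ s, ‖v x‖ ^ 2
        ≤ ∑ x ∈ s, K ^ 2 * (Fintype.card ι * ∑ i, ‖W (σ i x)‖ ^ 2) := by
          refine Finset.sum_le_sum fun x _ => ?_
          have h1 : ‖v x‖ ^ 2 ≤ (K * ∑ i, ‖W (σ i x)‖) ^ 2 :=
            pow_le_pow_left₀ (norm_nonneg _) (hv x) 2
          have h3 : (∑ i, ‖W (σ i x)‖) ^ 2 ≤ Fintype.card ι * ∑ i, ‖W (σ i x)‖ ^ 2 :=
            sq_sum_le_card_mul_sum_sq
          rw [mul_pow] at h1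
          exact h1.trans (by gcongr)
      _ = K ^ 2 * (Fintype.card ι * ∑ i, ∑ x ∈ s, ‖W (σ i x)‖ ^ 2) := by
          rw [← Finset.mul_sum, ← Finset.mul_sum, Finset.sum_comm]
      _ ≤ K ^ 2 * (Fintype.card ι * ∑ _i : ι, ‖W‖ ^ 2) := by
          gcongr with i
          have := hW (s.map (σ i).toEmbedding)
          rwa [Finset.sum_map] at this
      _ = (K * Fintype.card ι * ‖W‖) ^ 2 := by
          rw [Finset.sum_const, Finset.card_univ, nsmul_eq_mul]; ring
  have hmem : Memℓp v 2 := by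
    refine memℓp_gen' (C := (K * Fintype.card ι * ‖W‖) ^ 2) fun s => ?_
    simpa only [h2, Real.rpow_natCast] using hsum s
  refine ⟨⟨v, hmem⟩, fun _ => rfl, ?_⟩
  refine lp.norm_le_of_forall_sum_le (p := 2) (by norm_num) (by positivity) fun s => ?_
  simpa only [h2, Real.rpow_natCast] using! hsum s

/-- The translations appearing in the discrete Laplacian: the identity and `x ↦ x ± eⱼ`. -/
def nbr (d : ℕ) : Option (Fin d × Bool) → (Fin d → ℤ) ≃ (Fin d → ℤ)
  | none => Equiv.refl _
  | some (j, b) => Equiv.addRight (Pi.single j (if b then 1 else -1))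

/-- The right-hand side `Δu - min(|u|, R)^{p-1} u` of the cut-off equation. -/
def rhs {d : ℕ} (p R : ℝ) (u : (Fin d → ℤ) → ℂ) (x : Fin d → ℤ) : ℂ :=
  lap u x - (amp p R ‖u x‖ : ℂ) * u x

lemma lap_sub {d : ℕ} (u w : (Fin d → ℤ) → ℂ) (x : Fin d → ℤ) :
    lap u x - lap w x = lap (fun y => u y - w y) x := by
  simp only [lap, ← Finset.sum_sub_distrib]
  exact Finset.sum_congr rfl fun j _ => by ring

lemma norm_lap_le {d : ℕ} (u : (Fin d → ℤ) → ℂ) (x : Fin d → ℤ) :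
    ‖lap u x‖ ≤ ∑ j, (‖u (x + Pi.single j 1)‖ + ‖u (x - Pi.single j 1)‖ + 2 * ‖u x‖) := by
  refine (norm_sum_le _ _).trans (Finset.sum_le_sum fun j _ => ?_)
  refine (norm_sub_le _ _).trans ?_
  rw [norm_mul, Complex.norm_ofNat]
  gcongr
  exact norm_add_le _ _

/-- Pointwise Lipschitz estimate for `rhs`, with the weight moved onto the translates. -/
lemma rhs_diff {d : ℕ} (k : ℕ) {p R : ℝ} (hp : 1 < p) (hR : 0 ≤ R)
    (u w : (Fin d → ℤ) → ℂ) (x : Fin d → ℤ) :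
    jap x ^ k * ‖rhs p R u x - rhs p R w x‖ ≤
      (2 ^ k + 2 * d + (1 + p) * R ^ (p - 1)) *
        ∑ i, jap (nbr d i x) ^ k * ‖u (nbr d i x) - w (nbr d i x)‖ := by
  set δ : (Fin d → ℤ) → ℂ := fun y => u y - w y with hδ
  have hwt := wt_pos k x
  have hsplit : rhs p R u x - rhs p R w x
      = lap δ x - ((amp p R ‖u x‖ : ℂ) * u x - (amp p R ‖w x‖ : ℂ) * w x) := by
    rw [← lap_sub, rhs, rhs]; ring
  have h1 : ‖rhs p R u x - rhs p R w x‖ ≤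
      ∑ j, (‖δ (x + Pi.single j 1)‖ + ‖δ (x - Pi.single j 1)‖ + 2 * ‖δ x‖) +
        (1 + p) * R ^ (p - 1) * ‖δ x‖ := by
    rw [hsplit]
    exact (norm_sub_le _ _).trans (add_le_add (norm_lap_le δ x) (amp_lipschitz hp hR _ _))
  have hsum : ∑ i, jap (nbr d i x) ^ k * ‖u (nbr d i x) - w (nbr d i x)‖
      = jap x ^ k * ‖δ x‖ + ∑ j, (jap (x + Pi.single j 1) ^ k * ‖δ (x + Pi.single j 1)‖
        + jap (x - Pi.single j 1) ^ k * ‖δ (x - Pi.single j 1)‖) := by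
    rw [Fintype.sum_option, Fintype.sum_prod_type]
    simp only [Fintype.sum_bool, nbr, Equiv.refl_apply, Equiv.coe_addRight, if_true, hδ,
      Bool.false_eq_true, if_false, Pi.single_neg, ← sub_eq_add_neg]
  have hp1 : ∀ j : Fin d, jap x ^ k ≤ 2 ^ k * jap (x + Pi.single j 1) ^ k := by
    intro j
    rw [← mul_pow]
    exact pow_le_pow_left₀ (zero_le_one.trans (one_le_jap x)) (jap_shift j 1 (by norm_num) x) k
  have hp2 : ∀ j : Fin d, jap x ^ k ≤ 2 ^ k * jap (x - Pi.single j 1) ^ k := by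
    intro j
    rw [← mul_pow, sub_eq_add_neg, ← Pi.single_neg]
    exact pow_le_pow_left₀ (zero_le_one.trans (one_le_jap x)) (jap_shift j (-1) (by norm_num) x) k
  rw [hsum]
  set N := (1 + p) * R ^ (p - 1) with hN
  have hN0 : 0 ≤ N := by
    have : 0 ≤ R ^ (p - 1) := Real.rpow_nonneg hR _
    have : 0 ≤ 1 + p := by linarith
    positivity
  set Q := ∑ j, (jap (x + Pi.single j 1) ^ k * ‖δ (x + Pi.single j 1)‖
        + jap (x - Pi.single j 1) ^ k * ‖δ (x - Pi.single j 1)‖) with hQ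
  have hQ0 : 0 ≤ Q := Finset.sum_nonneg fun j _ =>
    add_nonneg (mul_nonneg (wt_pos k _).le (norm_nonneg _))
      (mul_nonneg (wt_pos k _).le (norm_nonneg _))
  have hmain : jap x ^ k *
      ∑ j, (‖δ (x + Pi.single j 1)‖ + ‖δ (x - Pi.single j 1)‖ + 2 * ‖δ x‖)
      ≤ 2 ^ k * Q + 2 * d * (jap x ^ k * ‖δ x‖) := by
    have : 2 * (d : ℝ) * (jap x ^ k * ‖δ x‖) = ∑ _j : Fin d, 2 * (jap x ^ k * ‖δ x‖) := by
      rw [Finset.sum_const, Finset.card_univ, Fintype.card_fin, nsmul_eq_mul]; ring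
    rw [this, hQ, Finset.mul_sum, Finset.mul_sum, ← Finset.sum_add_distrib]
    refine Finset.sum_le_sum fun j _ => ?_
    have a1 := mul_le_mul_of_nonneg_right (hp1 j) (norm_nonneg (δ (x + Pi.single j 1)))
    have a2 := mul_le_mul_of_nonneg_right (hp2 j) (norm_nonneg (δ (x - Pi.single j 1)))
    linarith
  have h3 := mul_le_mul_of_nonneg_left h1 hwt.le
  have hD : 0 ≤ jap x ^ k * ‖δ x‖ := mul_nonneg hwt.le (norm_nonneg _)
  have h2k : (0 : ℝ) ≤ 2 ^ k := pow_nonneg zero_le_two k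
  have hd0 : (0 : ℝ) ≤ d := Nat.cast_nonneg d
  have h4 := mul_nonneg h2k hD
  have h5 : 0 ≤ (2 * (d : ℝ) + N) * Q :=
    mul_nonneg (add_nonneg (mul_nonneg zero_le_two hd0) hN0) hQ0
  clear_value Q N
  calc jap x ^ k * ‖rhs p R u x - rhs p R w x‖
      ≤ 2 ^ k * Q + 2 * d * (jap x ^ k * ‖δ x‖) + N * (jap x ^ k * ‖δ x‖) := by
        rw [mul_add] at h3
        linarith
    _ ≤ 2 ^ k * Q + 2 * d * (jap x ^ k * ‖δ x‖) + N * (jap x ^ k * ‖δ x‖)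
        + (2 ^ k * (jap x ^ k * ‖δ x‖) + (2 * (d : ℝ) + N) * Q) :=
        le_add_of_nonneg_right (add_nonneg h4 h5)
    _ = (2 ^ k + 2 * d + N) * (jap x ^ k * ‖δ x‖ + Q) := by ring

/-- The cut-off right-hand side, conjugated by the weight, is a globally Lipschitz map of `ℓ²`. -/
lemma exists_field (d k : ℕ) {p R : ℝ} (hp : 1 < p) (hR : 0 ≤ R) :
    ∃ (N : Hd d → Hd d) (K : ℝ≥0), LipschitzWith K N ∧ N 0 = 0 ∧
      ∀ (U : Hd d) x, N U x = ((jap x ^ k : ℝ) : ℂ) *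
        rhs p R (fun y => ((jap y ^ k : ℝ) : ℂ)⁻¹ * U y) x := by
  set C : ℝ := 2 ^ k + 2 * d + (1 + p) * R ^ (p - 1) with hC
  have hC0 : 0 ≤ C := by
    have : 0 ≤ R ^ (p - 1) := Real.rpow_nonneg hR _
    have : 0 ≤ 1 + p := by linarith
    positivity
  set f : Hd d → (Fin d → ℤ) → ℂ := fun U x => ((jap x ^ k : ℝ) : ℂ) *
        rhs p R (fun y => ((jap y ^ k : ℝ) : ℂ)⁻¹ * U y) x with hf
  have hdiff : ∀ U W : Hd d, ∀ x, ‖f U x - f W x‖ ≤ C * ∑ i, ‖(U - W) (nbr d i x)‖ := by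
    intro U W x
    have := rhs_diff k hp hR (fun y => ((jap y ^ k : ℝ) : ℂ)⁻¹ * U y)
      (fun y => ((jap y ^ k : ℝ) : ℂ)⁻¹ * W y) x
    rw [hf, ← mul_sub, norm_mul, norm_wt]
    refine this.trans (le_of_eq ?_)
    congr 1
    refine Finset.sum_congr rfl fun i _ => ?_
    have hpos := wt_pos k (nbr d i x)
    rw [← mul_sub, norm_mul, norm_inv, norm_wt, mul_inv_cancel_left₀ hpos.ne']
    rfl
  have hf0 : ∀ x, f 0 x = 0 := by
    intro x
    simp [hf, rhs, lap]
  have hex : ∀ U : Hd d, ∃ V : Hd d, ∀ x, V x = f U x := by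
    intro U
    obtain ⟨V, hV, -⟩ := exists_lp_of_le (nbr d) hC0 U (f U) (fun x => by
      simpa only [hf0, sub_zero] using hdiff U 0 x)
    exact ⟨V, hV⟩
  choose N hN using hex
  refine ⟨N, Real.toNNReal (C * Fintype.card (Option (Fin d × Bool))), ?_, ?_, hN⟩
  · refine LipschitzWith.of_dist_le_mul fun U W => ?_
    rw [Real.coe_toNNReal _ (by positivity), dist_eq_norm, dist_eq_norm]
    obtain ⟨V, hV, hVn⟩ := exists_lp_of_le (nbr d) hC0 (U - W) (fun x => f U x - f W x)
      (hdiff U W)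
    have : N U - N W = V := by
      refine lp.ext (funext fun x => ?_)
      rw [hV, lp.coeFn_sub, Pi.sub_apply, hN, hN]
    rw [this]; exact hVn
  · refine lp.ext (funext fun x => ?_)
    rw [hN, hf0]; rfl

lemma contW_of_lift {d k : ℕ} {S : Set ℝ} {f : ℝ → (Fin d → ℤ) → ℂ} (U : ℝ → Hd d)
    (h : ∀ t m, U t m = ((jap m ^ k : ℝ) : ℂ) * f t m) (hU : ContinuousOn U S) :
    ContW k S f := by
  intro t ht
  have e : (fun s => w2 k (fun m => f s m - f t m)) = fun s => ENNReal.ofReal ‖U s - U t‖ := by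
    funext s
    refine w2_eq_norm _ fun m => ?_
    rw [lp.coeFn_sub, Pi.sub_apply, h, h, mul_sub]
  rw [e, ← ENNReal.ofReal_zero]
  refine ENNReal.tendsto_ofReal ?_
  have := ((hU t ht).sub_const (U t)).norm
  simpa using! this

lemma derivW_of_lift {d k : ℕ} {S : Set ℝ} {f f' : ℝ → (Fin d → ℤ) → ℂ} (U U' : ℝ → Hd d)
    (h : ∀ t m, U t m = ((jap m ^ k : ℝ) : ℂ) * f t m)
    (h' : ∀ t m, U' t m = ((jap m ^ k : ℝ) : ℂ) * f' t m)
    (hU : ∀ t ∈ S, HasDerivWithinAt U (U' t) S t) :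
    DerivW k S f f' := by
  intro t ht
  have e : (fun s => w2 k (fun m => (s - t)⁻¹ • (f s m - f t m) - f' t m))
      = fun s => ENNReal.ofReal ‖slope U t s - U' t‖ := by
    funext s
    refine w2_eq_norm _ fun m => ?_
    rw [lp.coeFn_sub, Pi.sub_apply, slope_def_module, lp.coeFn_smul, Pi.smul_apply, lp.coeFn_sub,
      Pi.sub_apply, h, h, h', Complex.real_smul, Complex.real_smul]
    ring
  rw [e, ← ENNReal.ofReal_zero]
  refine ENNReal.tendsto_ofReal ?_
  have := ((hasDerivWithinAt_iff_tendsto_slope.1 (hU t ht)).sub_const (U' t)).norm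
  simpa using! this

/-- Global existence for the cut-off equation in `ℓ^{2,k}`. -/
lemma exists_cutoff (d k : ℕ) {p R T : ℝ} (hp : 1 < p) (hR : 0 ≤ R) (hT : 0 ≤ T)
    {f g : (Fin d → ℤ) → ℂ} (hf : w2 k f < ⊤) (hg : w2 k g < ⊤) :
    ∃ u u1 u2, IsC2 k (Set.Icc 0 T) u u1 u2 ∧
      (∀ t ∈ Set.Icc 0 T, ∀ x, u2 t x = rhs p R (u t) x) ∧
      (∀ x, u 0 x = f x) ∧ (∀ x, u1 0 x = g x) := by
  obtain ⟨N, K, hNl, hN0, hN⟩ := exists_field d k hp hR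
  set F : Hd d × Hd d → Hd d × Hd d := fun z => (z.2, N z.1) with hF
  have hFl : LipschitzWith (max 1 (K * 1)) F :=
    LipschitzWith.prod_snd.prodMk (hNl.comp LipschitzWith.prod_fst)
  have hF0 : F 0 = 0 := by simp [hF, hN0]
  obtain ⟨α, hα0, hα⟩ := global_ode hFl hF0
    ((⟨_, memlp_of_w2 hf⟩, ⟨_, memlp_of_w2 hg⟩) : Hd d × Hd d) hT
  have hαc : ContinuousOn α (Set.Icc 0 T) := fun t ht => (hα t ht).continuousWithinAt
  set u : ℝ → (Fin d → ℤ) → ℂ := fun t m => ((jap m ^ k : ℝ) : ℂ)⁻¹ * (α t).1 m with hu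
  set u1 : ℝ → (Fin d → ℤ) → ℂ := fun t m => ((jap m ^ k : ℝ) : ℂ)⁻¹ * (α t).2 m with hu1
  set u2 : ℝ → (Fin d → ℤ) → ℂ := fun t m => rhs p R (u t) m with hu2
  have l0 : ∀ t m, (α t).1 m = ((jap m ^ k : ℝ) : ℂ) * u t m := fun t m =>
    (mul_inv_cancel_left₀ (wt_ne k m) _).symm
  have l1 : ∀ t m, (α t).2 m = ((jap m ^ k : ℝ) : ℂ) * u1 t m := fun t m =>
    (mul_inv_cancel_left₀ (wt_ne k m) _).symm
  have l2 : ∀ t m, N (α t).1 m = ((jap m ^ k : ℝ) : ℂ) * u2 t m := fun t m => hN _ _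
  refine ⟨u, u1, u2, ⟨?_, ?_, ?_, ?_, ?_, ?_, ?_, ?_⟩, fun _ _ _ => rfl, ?_, ?_⟩
  · intro t _; rw [w2_eq_norm _ (l0 t)]; exact ENNReal.ofReal_lt_top
  · intro t _; rw [w2_eq_norm _ (l1 t)]; exact ENNReal.ofReal_lt_top
  · intro t _; rw [w2_eq_norm _ (l2 t)]; exact ENNReal.ofReal_lt_top
  · exact contW_of_lift _ l0 (continuous_fst.comp_continuousOn hαc)
  · exact contW_of_lift _ l1 (continuous_snd.comp_continuousOn hαc)
  · exact contW_of_lift _ l2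
      (hNl.continuous.comp_continuousOn (continuous_fst.comp_continuousOn hαc))
  · exact derivW_of_lift _ _ l0 l1 fun t ht => (hα t ht).fst
  · exact derivW_of_lift _ _ l1 l2 fun t ht => (hα t ht).snd
  · intro x
    simp only [hu, hα0]
    exact inv_mul_cancel_left₀ (wt_ne k x) _
  · intro x
    simp only [hu1, hα0]
    exact inv_mul_cancel_left₀ (wt_ne k x) _

/-! ### Pointwise consequences of regularity in the weighted norm -/

lemma DerivW.hasDerivWithinAt {d k : ℕ} {S : Set ℝ} {f f' : ℝ → (Fin d → ℤ) → ℂ}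
    (h : DerivW k S f f') {t : ℝ} (ht : t ∈ S) (x : Fin d → ℤ) :
    HasDerivWithinAt (fun s => f s x) (f' t x) S t := by
  rw [hasDerivWithinAt_iff_tendsto_slope, tendsto_iff_norm_sub_tendsto_zero]
  have h1 : Tendsto (fun s => ENNReal.ofReal ‖slope (fun s => f s x) t s - f' t x‖)
      (nhdsWithin t (S \ {t})) (nhds 0) := by
    refine tendsto_of_tendsto_of_tendsto_of_le_of_le tendsto_const_nhds (h t ht)
      (fun _ => zero_le) (fun s => ?_)
    have := norm_le_w2 k (fun m => (s - t)⁻¹ • (f s m - f t m) - f' t m) x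
    rwa [slope_def_module]
  have h2 := (ENNReal.tendsto_toReal ENNReal.zero_ne_top).comp h1
  simpa [Function.comp_def, ENNReal.toReal_ofReal] using! h2

lemma ContW.bounded {d k : ℕ} {T : ℝ} {f : ℝ → (Fin d → ℤ) → ℂ}
    (h : ContW k (Set.Icc 0 T) f) (hm : ∀ t ∈ Set.Icc 0 T, w2 k (f t) < ⊤) :
    ∃ B : ℝ, ∀ t ∈ Set.Icc 0 T, ∀ x, ‖f t x‖ ≤ B := by
  refine (isCompact_Icc (a := (0 : ℝ)) (b := T)).induction_on
    (p := fun s => ∃ B : ℝ, ∀ t ∈ s, ∀ x, ‖f t x‖ ≤ B) ⟨0, by simp⟩ ?_ ?_ ?_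
  · rintro s s' hs ⟨B, hB⟩
    exact ⟨B, fun t ht => hB t (hs ht)⟩
  · rintro s s' ⟨B, hB⟩ ⟨B', hB'⟩
    refine ⟨max B B', fun t ht x => ?_⟩
    rcases ht with ht | ht
    · exact (hB t ht x).trans (le_max_left _ _)
    · exact (hB' t ht x).trans (le_max_right _ _)
  · intro t ht
    refine ⟨_, (h t ht).eventually (gt_mem_nhds zero_lt_one), 1 + (w2 k (f t)).toReal, ?_⟩
    intro s hs x
    have h1 : ‖f s x - f t x‖ ≤ 1 := by
      have := (norm_le_w2 k (fun m => f s m - f t m) x).trans (le_of_lt hs)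
      rwa [ENNReal.ofReal_le_one] at this
    have h2 : ‖f t x‖ ≤ (w2 k (f t)).toReal :=
      (ENNReal.ofReal_le_iff_le_toReal (hm t ht).ne).1 (norm_le_w2 k (f t) x)
    have h3 := norm_add_le (f s x - f t x) (f t x)
    rw [sub_add_cancel] at h3
    linarith

lemma norm_lap_le_of_bound {d : ℕ} {u : (Fin d → ℤ) → ℂ} {A : ℝ} (h : ∀ y, ‖u y‖ ≤ A)
    (x : Fin d → ℤ) : ‖lap u x‖ ≤ 4 * d * A := by
  refine (norm_lap_le u x).trans ?_
  calc ∑ j, (‖u (x + Pi.single j 1)‖ + ‖u (x - Pi.single j 1)‖ + 2 * ‖u x‖)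
      ≤ ∑ _j : Fin d, 4 * A := Finset.sum_le_sum fun j _ => by
        linarith [h (x + Pi.single j 1), h (x - Pi.single j 1), h x]
    _ = 4 * d * A := by
        rw [Finset.sum_const, Finset.card_univ, Fintype.card_fin, nsmul_eq_mul]; ring

/-! ### The a priori bound -/

/-- The potential of the cut-off nonlinearity as a function of `s = |u|²`. -/
def pot (p R s : ℝ) : ℝ := ∫ σ in (0 : ℝ)..s, amp p R (Real.sqrt σ)

lemma continuous_amp_sqrt {p R : ℝ} (hp : 1 < p) :
    Continuous fun σ => amp p R (Real.sqrt σ) :=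
  (Real.continuous_sqrt.min continuous_const).rpow_const fun _ => Or.inr (by linarith)

lemma hasDerivAt_pot {p R : ℝ} (hp : 1 < p) (s : ℝ) :
    HasDerivAt (pot p R) (amp p R (Real.sqrt s)) s :=
  (continuous_amp_sqrt hp).integral_hasStrictDerivAt 0 s |>.hasDerivAt

lemma pot_nonneg {p R s : ℝ} (hR : 0 ≤ R) (hs : 0 ≤ s) : 0 ≤ pot p R s :=
  intervalIntegral.integral_nonneg hs fun _ _ => amp_nonneg hR (Real.sqrt_nonneg _)

/-- The potential is bounded uniformly in the cut-off `R`. -/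
lemma pot_le {p R s A : ℝ} (hp : 1 < p) (hR : 0 ≤ R) (hs : 0 ≤ s) (hA : 0 ≤ A) (hsA : s ≤ A ^ 2) :
    pot p R s ≤ A ^ (p - 1) * A ^ 2 := by
  have h := intervalIntegral.norm_integral_le_of_norm_le_const (a := 0) (b := s)
    (f := fun σ => amp p R (Real.sqrt σ)) (C := A ^ (p - 1)) (fun σ hσ => by
      rw [Set.uIoc_of_le hs] at hσ
      rw [Real.norm_of_nonneg (amp_nonneg hR (Real.sqrt_nonneg _))]
      refine Real.rpow_le_rpow (le_min (Real.sqrt_nonneg _) hR) ?_ (by linarith)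
      exact (min_le_left _ _).trans (Real.sqrt_le_iff.2 ⟨hA, hσ.2.trans hsA⟩))
  rw [sub_zero, abs_of_nonneg hs] at h
  calc pot p R s ≤ A ^ (p - 1) * s := (le_abs_self _).trans h
    _ ≤ A ^ (p - 1) * A ^ 2 := by gcongr

/-- A priori bound for the cut-off equation, uniform in `R`: the local energy
`|∂ₜu|² + |u|² + pot(|u|²)` at a site has time derivative `2⟨∂ₜu, Δu⟩ + 2⟨u, ∂ₜu⟩`, the contribution
of the nonlinearity being cancelled by that of the potential. -/
lemma apriori {d k : ℕ} {p R T A : ℝ} (hp : 1 < p) (hR : 0 ≤ R) (hA : 0 ≤ A)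
    {u u1 u2 : ℝ → (Fin d → ℤ) → ℂ} (hu : IsC2 k (Set.Icc 0 T) u u1 u2)
    (heq : ∀ t ∈ Set.Icc 0 T, ∀ x, u2 t x = rhs p R (u t) x)
    (h0 : ∀ x, ‖u 0 x‖ ≤ A) (h1 : ∀ x, ‖u1 0 x‖ ≤ A) :
    ∀ x, ∀ t ∈ Set.Icc 0 T, ‖u t x‖ ^ 2 ≤
      2 * (A ^ 2 + A ^ 2 + A ^ (p - 1) * A ^ 2) * Real.exp (2 * (8 * d + 2) * T) := by
  obtain ⟨B0, hB0⟩ := hu.cont0.bounded hu.mem0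
  obtain ⟨B1, hB1⟩ := hu.cont1.bounded hu.mem1
  have hpot : ∀ y t, 0 ≤ pot p R (‖u t y‖ ^ 2) := fun y t => pot_nonneg hR (sq_nonneg _)
  have key := sup_gronwall (T := T) (C := 8 * d + 2)
    (E := A ^ 2 + A ^ 2 + A ^ (p - 1) * A ^ 2) (by positivity)
    (fun y t => ‖u1 t y‖ ^ 2 + ‖u t y‖ ^ 2 + pot p R (‖u t y‖ ^ 2))
    (fun y t => 2 * inner ℝ (u1 t y) (lap (u t) y) + 2 * inner ℝ (u t y) (u1 t y))
    (fun y t _ => by have := hpot y t; positivity)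
    ⟨B1 ^ 2 + B0 ^ 2 + B0 ^ (p - 1) * B0 ^ 2, fun y t ht => ?_⟩
    (fun y t ht => ?_) (fun t ht M hM y => ?_) (fun y => ?_)
  · intro x t ht
    have := key x t ht
    have h2 := hpot x t
    nlinarith [sq_nonneg ‖u1 t x‖]
  · have a0 := pow_le_pow_left₀ (norm_nonneg _) (hB0 t ht y) 2
    have a1 := pow_le_pow_left₀ (norm_nonneg _) (hB1 t ht y) 2
    have a2 := pot_le (p := p) hp hR (sq_nonneg _) ((norm_nonneg _).trans (hB0 t ht y)) a0
    linarith
  · have d0 := (hu.hder1.hasDerivWithinAt ht y).norm_sq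
    have d1 := (hu.hder2.hasDerivWithinAt ht y).norm_sq
    have d2 := (hasDerivAt_pot (R := R) hp (‖u t y‖ ^ 2)).comp_hasDerivWithinAt t d0
    refine ((d1.add d0).add d2).congr_deriv ?_
    rw [Real.sqrt_sq (norm_nonneg _), heq t ht y, rhs, ← Complex.real_smul, inner_sub_right,
      real_inner_smul_right, real_inner_comm (u t y) (u1 t y)]
    ring
  · have hM0 : 0 ≤ M := le_trans (by have := hpot y t; positivity) (hM y)
    have b0 : ∀ z, ‖u t z‖ ≤ Real.sqrt M := fun z => Real.le_sqrt_of_sq_le (by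
      nlinarith [hM z, hpot z t, sq_nonneg ‖u1 t z‖])
    have b1 : ∀ z, ‖u1 t z‖ ≤ Real.sqrt M := fun z => Real.le_sqrt_of_sq_le (by
      nlinarith [hM z, hpot z t, sq_nonneg ‖u t z‖])
    have c1 : inner ℝ (u1 t y) (lap (u t) y) ≤ Real.sqrt M * (4 * d * Real.sqrt M) :=
      (real_inner_le_norm _ _).trans (mul_le_mul (b1 y) (norm_lap_le_of_bound b0 y)
        (norm_nonneg _) (Real.sqrt_nonneg _))
    have c2 : inner ℝ (u t y) (u1 t y) ≤ Real.sqrt M * Real.sqrt M :=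
      (real_inner_le_norm _ _).trans (mul_le_mul (b0 y) (b1 y)
        (norm_nonneg _) (Real.sqrt_nonneg _))
    have hs := Real.mul_self_sqrt hM0
    have e : Real.sqrt M * (4 * d * Real.sqrt M) = 4 * d * M := by
      linear_combination 4 * d * hs
    rw [e] at c1
    rw [hs] at c2
    change 2 * inner ℝ (u1 t y) (lap (u t) y) + 2 * inner ℝ (u t y) (u1 t y) ≤ (8 * d + 2) * M
    linarith
  · have a0 := pow_le_pow_left₀ (norm_nonneg _) (h0 y) 2
    have a1 := pow_le_pow_left₀ (norm_nonneg _) (h1 y) 2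
    have a2 := pot_le (p := p) hp hR (sq_nonneg _) hA a0
    change ‖u1 0 y‖ ^ 2 + ‖u 0 y‖ ^ 2 + pot p R (‖u 0 y‖ ^ 2) ≤ _
    linarith

/-! ### Uniqueness and global existence -/

/-- Two solutions are bounded by a common `R`, hence solve the same cut-off equation, whose
nonlinearity is Lipschitz; `sup_gronwall` applied to `|∂ₜw|² + |w|²` for the difference `w` gives
uniqueness. -/
lemma psol_unique {d k : ℕ} {p T : ℝ} (hp : 1 < p) {f g : (Fin d → ℤ) → ℂ}
    {u u1 u2 v v1 v2 : ℝ → (Fin d → ℤ) → ℂ}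
    (hu : PSol d k p (-1) f g (Set.Icc 0 T) u u1 u2)
    (hv : PSol d k p (-1) f g (Set.Icc 0 T) v v1 v2) :
    ∀ t ∈ Set.Icc (0 : ℝ) T, ∀ x, v t x = u t x := by
  obtain ⟨hu, hueq, hu0, hu10⟩ := hu
  obtain ⟨hv, hveq, hv0, hv10⟩ := hv
  obtain ⟨A0, hA0⟩ := hu.cont0.bounded hu.mem0
  obtain ⟨A1, hA1⟩ := hu.cont1.bounded hu.mem1
  obtain ⟨B0, hB0⟩ := hv.cont0.bounded hv.mem0
  obtain ⟨B1, hB1⟩ := hv.cont1.bounded hv.mem1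
  set R := max 0 (max A0 B0) with hRdef
  have hR : 0 ≤ R := le_max_left _ _
  set L := (1 + p) * R ^ (p - 1) with hL
  have hL0 : 0 ≤ L := mul_nonneg (by linarith) (Real.rpow_nonneg hR _)
  have hw2 : ∀ t ∈ Set.Icc 0 T, ∀ x, ‖v2 t x - u2 t x‖ ≤
      ‖lap (fun y => v t y - u t y) x‖ + L * ‖v t x - u t x‖ := by
    intro t ht x
    have e1 : u2 t x = lap (u t) x - (amp p R ‖u t x‖ : ℂ) * u t x := by
      rw [amp_of_le ((hA0 t ht x).trans ((le_max_left _ _).trans (le_max_right _ _)))]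
      have := hueq t ht x
      push_cast at this ⊢
      linear_combination this
    have e2 : v2 t x = lap (v t) x - (amp p R ‖v t x‖ : ℂ) * v t x := by
      rw [amp_of_le ((hB0 t ht x).trans ((le_max_right _ _).trans (le_max_right _ _)))]
      have := hveq t ht x
      push_cast at this ⊢
      linear_combination this
    have e3 : v2 t x - u2 t x = lap (fun y => v t y - u t y) x -
        ((amp p R ‖v t x‖ : ℂ) * v t x - (amp p R ‖u t x‖ : ℂ) * u t x) := by
      rw [e1, e2, ← lap_sub]; ring
    rw [e3]
    exact (norm_sub_le _ _).trans (add_le_add le_rfl (amp_lipschitz hp hR _ _))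
  have key := sup_gronwall (T := T) (C := 8 * d + 2 * L + 2) (E := 0) (by positivity)
    (fun y t => ‖v1 t y - u1 t y‖ ^ 2 + ‖v t y - u t y‖ ^ 2)
    (fun y t => 2 * inner ℝ (v1 t y - u1 t y) (v2 t y - u2 t y)
      + 2 * inner ℝ (v t y - u t y) (v1 t y - u1 t y))
    (fun y t _ => by positivity)
    ⟨(B1 + A1) ^ 2 + (B0 + A0) ^ 2, fun y t ht => ?_⟩
    (fun y t ht => ?_) (fun t ht M hM y => ?_) (fun y => ?_)
  · intro t ht x
    have := key x t ht
    rw [mul_zero, zero_mul] at this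
    have h2 : ‖v t x - u t x‖ ^ 2 = 0 :=
      le_antisymm (by nlinarith [sq_nonneg ‖v1 t x - u1 t x‖]) (sq_nonneg _)
    rw [sq_eq_zero_iff, norm_eq_zero, sub_eq_zero] at h2
    exact h2
  · have a0 : ‖v t y - u t y‖ ≤ B0 + A0 :=
      (norm_sub_le _ _).trans (add_le_add (hB0 t ht y) (hA0 t ht y))
    have a1 : ‖v1 t y - u1 t y‖ ≤ B1 + A1 :=
      (norm_sub_le _ _).trans (add_le_add (hB1 t ht y) (hA1 t ht y))
    exact add_le_add (pow_le_pow_left₀ (norm_nonneg _) a1 2)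
      (pow_le_pow_left₀ (norm_nonneg _) a0 2)
  · have d0 := ((hv.hder1.hasDerivWithinAt ht y).sub (hu.hder1.hasDerivWithinAt ht y)).norm_sq
    have d1 := ((hv.hder2.hasDerivWithinAt ht y).sub (hu.hder2.hasDerivWithinAt ht y)).norm_sq
    exact d1.add d0
  · have hM0 : 0 ≤ M := le_trans (by positivity) (hM y)
    have b0 : ∀ z, ‖v t z - u t z‖ ≤ Real.sqrt M := fun z => Real.le_sqrt_of_sq_le (by
      nlinarith [hM z, sq_nonneg ‖v1 t z - u1 t z‖])
    have b1 : ∀ z, ‖v1 t z - u1 t z‖ ≤ Real.sqrt M := fun z => Real.le_sqrt_of_sq_le (by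
      nlinarith [hM z, sq_nonneg ‖v t z - u t z‖])
    have b2 : ‖v2 t y - u2 t y‖ ≤ (4 * d + L) * Real.sqrt M := by
      have h1 := hw2 t ht y
      have h2 := norm_lap_le_of_bound b0 y
      have h3 := mul_le_mul_of_nonneg_left (b0 y) hL0
      linarith
    have c1 : inner ℝ (v1 t y - u1 t y) (v2 t y - u2 t y) ≤
        Real.sqrt M * ((4 * d + L) * Real.sqrt M) :=
      (real_inner_le_norm _ _).trans (mul_le_mul (b1 y) b2
        (norm_nonneg _) (Real.sqrt_nonneg _))
    have c2 : inner ℝ (v t y - u t y) (v1 t y - u1 t y) ≤ Real.sqrt M * Real.sqrt M :=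
      (real_inner_le_norm _ _).trans (mul_le_mul (b0 y) (b1 y)
        (norm_nonneg _) (Real.sqrt_nonneg _))
    have hs := Real.mul_self_sqrt hM0
    have e : Real.sqrt M * ((4 * d + L) * Real.sqrt M) = (4 * d + L) * M := by
      linear_combination (4 * d + L) * hs
    rw [e] at c1
    rw [hs] at c2
    change 2 * inner ℝ (v1 t y - u1 t y) (v2 t y - u2 t y)
      + 2 * inner ℝ (v t y - u t y) (v1 t y - u1 t y) ≤ (8 * d + 2 * L + 2) * M
    linarith
  · rw [hu0, hv0, hu10, hv10, sub_self, sub_self]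
    simp

/-- global well-posedness of the defocusing semilinear discrete wave
equation `∂ₜ²u - Δu = -|u|^{p-1}u` with data `f, g ∈ ℓ^{2,k}`, `k ∈ {0,1}`:
for every `T > 0` there is a unique classical solution on `[0,T]`. -/
theorem stmt16 (d : ℕ) (hd : 0 < d) (k : ℕ) (hk : k = 0 ∨ k = 1) (p : ℝ) (hp : 1 < p)
    (f g : (Fin d → ℤ) → ℂ) (hf : w2 k f < ⊤) (hg : w2 k g < ⊤) :
    ∀ T : ℝ, 0 < T →
      ∃ u u1 u2, PSol d k p (-1) f g (Set.Icc 0 T) u u1 u2 ∧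
        ∀ v v1 v2, PSol d k p (-1) f g (Set.Icc 0 T) v v1 v2 →
          ∀ t ∈ Set.Icc (0 : ℝ) T, ∀ x, v t x = u t x := by
  intro T hT
  set A : ℝ := max (w2 k f).toReal (w2 k g).toReal with hA
  have hA0 : 0 ≤ A := ENNReal.toReal_nonneg.trans (le_max_left _ _)
  have hfA : ∀ x, ‖f x‖ ≤ A := fun x =>
    ((ENNReal.ofReal_le_iff_le_toReal hf.ne).1 (norm_le_w2 k f x)).trans (le_max_left _ _)
  have hgA : ∀ x, ‖g x‖ ≤ A := fun x =>
    ((ENNReal.ofReal_le_iff_le_toReal hg.ne).1 (norm_le_w2 k g x)).trans (le_max_right _ _)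
  -- The cut-off level is the a priori bound itself, so the cut-off is never active.
  set R : ℝ := Real.sqrt
    (2 * (A ^ 2 + A ^ 2 + A ^ (p - 1) * A ^ 2) * Real.exp (2 * (8 * d + 2) * T)) with hRdef
  have hR : 0 ≤ R := Real.sqrt_nonneg _
  obtain ⟨u, u1, u2, hC2, heq, hu0, hu1⟩ := exists_cutoff d k hp hR hT.le hf hg
  have hb := apriori hp hR hA0 hC2 heq (fun x => by rw [hu0]; exact hfA x)
    (fun x => by rw [hu1]; exact hgA x)
  have hsol : PSol d k p (-1) f g (Set.Icc 0 T) u u1 u2 := by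
    refine ⟨hC2, fun t ht x => ?_, hu0, hu1⟩
    have hle : ‖u t x‖ ≤ R := Real.le_sqrt_of_sq_le (hb x t ht)
    rw [heq t ht x, rhs, amp_of_le hle]
    push_cast
    ring
  exact ⟨u, u1, u2, hsol, fun v v1 v2 hv => psol_unique hp hsol hv⟩
end
end
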